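/- Let k and t be positive integers with k ≥ 4. There exists n₀ = n₀(k,t) such that for all integers n ≥ n₀, the maximum number of edges in a k-uniform hypergraph on n vertices containing no copy of the k-uniform linear path P^{(k)}_{2t+2} of length 2t+2 equals C(n−1,k−1) + C(n−2,k−1) + … + C(n−t,k−1) + C(n−t−2,k−2). -/

import Mathlib

open Finset

/-- The family `F` of k-sets contains a k-uniform linear path of length ℓ. -/
def ContainsLinearPath (k ℓ : ℕ) {n : ℕ} (F : Finset (Finset (Fin n))) : Prop :=
  ∃ P : Fin ℓ → Finset (Fin n), Function.Injective P ∧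
    (∀ i, P i ∈ F) ∧ (∀ i, (P i).card = k) ∧
    (∀ i j : Fin ℓ, (i : ℕ) + 1 = (j : ℕ) → (P i ∩ P j).card = 1) ∧
    (∀ i j : Fin ℓ, (i : ℕ) + 1 < (j : ℕ) → P i ∩ P j = ∅)

/-!
The upper bound is proved by induction on `t` with the delta-system method. A set `A` is a kernel
of `F` if, whatever bounded set of vertices is to be avoided, some edge of `F` contains `A` and
meets that set only inside `A`; kernels that are pairs form a graph, and a path in this graph
lifts to a linear path in `F`. Füredi's intersection semilattice lemma shows that in a family
without a long linear path all but `O(n ^ (k - 2))` edges `E` are *centred* at a vertex `v`: all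
pairs `{v, x}` with `x ∈ E` are kernels. As the kernel graph has no path of length `2t + 2`, a
family with about `t * n ^ (k - 1) / (k - 1)!` edges has a vertex `v` adjacent to nearly all
vertices in the kernel graph. Apart from few exceptions, the edges avoiding `v` contain no linear
path of length `2t`, since such a path could be prolonged through `v` by two edges. The induction
hypothesis bounds their number, and the exceptions are outweighed by the edges through `v` that
the non-neighbours of `v` cost. Without linear paths of length two, pairs take the place of
vertices as centres and the same argument applies.
-/

open scoped FinsetFamily

universe u

/-! ### Linear paths -/

section LinearPath

variable {α : Type*} [DecidableEq α]

/-- `P 0, …, P (l - 1)` is a linear path in the family `F`. The sequence is indexed by all of `ℕ`,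
and its values from `l` on are irrelevant. -/
structure IsLinearPath (F : Finset (Finset α)) (l : ℕ) (P : ℕ → Finset α) : Prop where
  mem : ∀ i < l, P i ∈ F
  card_inter : ∀ i, i + 1 < l → #(P i ∩ P (i + 1)) = 1
  inter_eq_empty : ∀ i j, i + 1 < j → j < l → P i ∩ P j = ∅

/-- The family `F` contains a linear path with `l` edges. -/
def HasLinearPath (F : Finset (Finset α)) (l : ℕ) : Prop :=
  ∃ P, IsLinearPath F l P

/-- `F` contains a linear path with `l` edges and vertex set `W` that can be continued at `x`:
the vertex `x` lies on the last edge only. The path without edges is allowed, with `W = {x}`. -/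
def LinearPathTo (F : Finset (Finset α)) (l : ℕ) (W : Finset α) (x : α) : Prop :=
  ∃ P, IsLinearPath F l P ∧ W = insert x ((range l).biUnion P) ∧ ∀ i < l, (x ∈ P i ↔ i + 1 = l)

variable {F G : Finset (Finset α)} {E E' W : Finset α} {P : ℕ → Finset α} {k l : ℕ} {x y : α}

theorem IsLinearPath.mono (h : IsLinearPath F l P) (hFG : F ⊆ G) : IsLinearPath G l P :=
  ⟨fun i hi => hFG (h.mem i hi), h.card_inter, h.inter_eq_empty⟩

theorem HasLinearPath.mono (h : HasLinearPath F l) (hFG : F ⊆ G) : HasLinearPath G l :=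
  let ⟨P, hP⟩ := h; ⟨P, hP.mono hFG⟩

theorem IsLinearPath.card_inter_le_one (h : IsLinearPath F l P) {i j : ℕ} (hij : i < j)
    (hj : j < l) : #(P i ∩ P j) ≤ 1 := by
  rcases (Nat.succ_le_of_lt hij).eq_or_lt with rfl | hlt
  · exact (h.card_inter i hj).le
  · rw [h.inter_eq_empty i j hlt hj, card_empty]
    exact zero_le_one

theorem IsLinearPath.card_filter_mem_le_two (h : IsLinearPath F l P) (x : α) :
    #{i ∈ range l | x ∈ P i} ≤ 2 := by
  rcases {i ∈ range l | x ∈ P i}.eq_empty_or_nonempty with hempty | hne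
  · rw [hempty, card_empty]
    exact zero_le_two
  set i := {i ∈ range l | x ∈ P i}.min' hne
  have hcover : {i ∈ range l | x ∈ P i} ⊆ {i, i + 1} := by
    intro j hj
    have hxi := (mem_filter.1 (min'_mem _ hne)).2
    have hij : i ≤ j := min'_le _ j hj
    by_contra hne
    rw [mem_insert, mem_singleton, not_or] at hne
    obtain ⟨hjl, hxj⟩ := mem_filter.1 hj
    have hempty := h.inter_eq_empty i j (by omega) (mem_range.1 hjl)
    exact notMem_empty x (hempty ▸ mem_inter.2 ⟨hxi, hxj⟩)
  exact (card_le_card hcover).trans card_le_two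

theorem IsLinearPath.injOn (h : IsLinearPath F l P) (hF : ∀ E ∈ F, 2 ≤ #E) :
    Set.InjOn P (Set.Iio l) := by
  have hlt : ∀ i j, i < j → j < l → P i ≠ P j := fun i j hij hj heq => by
    have := h.card_inter_le_one hij hj
    rw [heq, inter_self] at this
    have := hF _ (h.mem j hj)
    omega
  intro i hi j hj heq
  rcases lt_trichotomy i j with hij | hij | hij
  · exact absurd heq (hlt i j hij hj)
  · exact hij
  · exact absurd heq.symm (hlt j i hij hi)

theorem IsLinearPath.update_succ (h : IsLinearPath F l P) (hE : E ∈ F)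
    (hlast : ∀ i, i + 1 = l → #(P i ∩ E) = 1) (hearlier : ∀ i, i + 1 < l → P i ∩ E = ∅) :
    IsLinearPath F (l + 1) (Function.update P l E) := by
  have hP : ∀ i < l, Function.update P l E i = P i := fun i hi =>
    Function.update_of_ne hi.ne _ _
  refine ⟨fun i hi => ?_, fun i hi => ?_, fun i j hij hj => ?_⟩
  · rcases Nat.lt_succ_iff_lt_or_eq.1 hi with h' | rfl
    · exact hP i h' ▸ h.mem i h'
    · simpa using hE
  · rw [hP i (by omega)]
    rcases (show i + 1 ≤ l by omega).lt_or_eq with h' | rfl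
    · exact hP _ h' ▸ h.card_inter i h'
    · simpa using hlast i rfl
  · rw [hP i (by omega)]
    rcases Nat.lt_succ_iff_lt_or_eq.1 hj with h' | rfl
    · exact hP _ h' ▸ h.inter_eq_empty i j hij h'
    · simpa using hearlier i hij

theorem hasLinearPath_two (hE : E ∈ F) (hE' : E' ∈ F) (h : #(E ∩ E') = 1) : HasLinearPath F 2 := by
  have hsingle : IsLinearPath F 1 fun _ => E := ⟨fun _ _ => hE, by omega, by omega⟩
  exact ⟨_, hsingle.update_succ hE' (fun _ _ => h) (by omega)⟩

namespace LinearPathTo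

theorem nil (F : Finset (Finset α)) (x : α) : LinearPathTo F 0 {x} x :=
  ⟨fun _ => ∅, ⟨by omega, by omega, by omega⟩, by simp, by omega⟩

theorem hasLinearPath (h : LinearPathTo F l W x) : HasLinearPath F l :=
  h.imp fun _ hP => hP.1

theorem mem (h : LinearPathTo F l W x) : x ∈ W := by
  obtain ⟨P, -, rfl, -⟩ := h
  exact mem_insert_self _ _

theorem card_le (h : LinearPathTo F l W x) (hF : ∀ E ∈ F, #E = k) : #W ≤ l * k + 1 := by
  obtain ⟨P, hP, rfl, -⟩ := h
  have hunion : #((range l).biUnion P) ≤ #(range l) * k :=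
    card_biUnion_le_card_mul _ _ _ fun i hi => (hF _ (hP.mem i (mem_range.1 hi))).le
  rw [card_range] at hunion
  exact (card_insert_le _ _).trans (by omega)

theorem extend (h : LinearPathTo F l W x) (hE : E ∈ F) (hx : x ∈ E) (hEW : E ∩ W ⊆ {x})
    (hy : y ∈ E) (hyx : y ≠ x) : LinearPathTo F (l + 1) (W ∪ E) y := by
  obtain ⟨P, hP, rfl, hxP⟩ := h
  have heq : ∀ i < l, ∀ z ∈ E, z ∈ P i → z = x := fun i hi z hz hzi =>
    mem_singleton.1 <| hEW <| mem_inter.2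
      ⟨hz, mem_insert_of_mem (mem_biUnion.2 ⟨i, mem_range.2 hi, hzi⟩)⟩
  have hupdate : ∀ i < l, Function.update P l E i = P i := fun i hi =>
    Function.update_of_ne hi.ne _ _
  refine ⟨_, hP.update_succ hE (fun i hi => ?_) (fun i hi => ?_), ?_, fun i hi => ?_⟩
  · have : P i ∩ E = {x} := by
      refine Subset.antisymm (fun z hz => ?_) (singleton_subset_iff.2 ?_)
      · exact mem_singleton.2 (heq i (by omega) z (mem_inter.1 hz).2 (mem_inter.1 hz).1)
      · exact mem_inter.2 ⟨(hxP i (by omega)).2 hi, hx⟩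
    rw [this, card_singleton]
  · refine eq_empty_iff_forall_notMem.2 fun z hz => ?_
    obtain rfl := heq i (by omega) z (mem_inter.1 hz).2 (mem_inter.1 hz).1
    exact hi.ne ((hxP i (by omega)).1 (mem_inter.1 hz).1)
  · rw [range_add_one, biUnion_insert, Function.update_self,
      biUnion_congr rfl fun i hi => hupdate i (mem_range.1 hi)]
    grind
  · rcases Nat.lt_succ_iff_lt_or_eq.1 hi with hil | rfl
    · rw [hupdate i hil]
      exact ⟨fun hyi => absurd (heq i hil y hy hyi) hyx, fun h' => by omega⟩
    · simpa using hy

end LinearPathTo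

theorem IsLinearPath.exists_linearPathTo (h : IsLinearPath F (l + 1) P) {X : Finset α}
    (hX : X ⊆ P l) (hX2 : 2 ≤ #X) :
    ∃ x ∈ X, LinearPathTo F (l + 1) ((range (l + 1)).biUnion P) x := by
  obtain ⟨x, hx, hfree⟩ : ∃ x ∈ X, ∀ i < l, x ∉ P i := by
    rcases l.eq_zero_or_pos with rfl | hl
    · obtain ⟨x, hx⟩ := card_pos.1 (by omega : 0 < #X)
      exact ⟨x, hx, by omega⟩
    have hlt : #(P (l - 1) ∩ P l) < #X := by
      have := h.card_inter (l - 1) (by omega)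
      rw [Nat.sub_add_cancel hl] at this
      omega
    obtain ⟨x, hx, hxP⟩ := exists_mem_notMem_of_card_lt_card hlt
    refine ⟨x, hx, fun i hi hxi => ?_⟩
    have hxi' : x ∈ P i ∩ P l := mem_inter.2 ⟨hxi, hX hx⟩
    rcases (show i + 1 ≤ l by omega).lt_or_eq with hil | rfl
    · rw [h.inter_eq_empty i l hil (by omega)] at hxi'
      exact notMem_empty _ hxi'
    · exact hxP hxi'
  refine ⟨x, hx, P, h, (insert_eq_self.2 (mem_biUnion.2 ⟨l, self_mem_range_succ l, hX hx⟩)).symm,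
    fun i hi => ⟨fun hxi => ?_, fun hil => ?_⟩⟩
  · by_contra hne
    exact hfree i (by omega) hxi
  · obtain rfl : i = l := by omega
    exact hX hx

end LinearPath

/-! ### Kernels -/

section Kernel

variable {α : Type*} [DecidableEq α]

/-- The set `A` is a kernel of `F` of strength `s`: even after forbidding `s` vertices, some edge
contains `A` and avoids the forbidden vertices outside `A`. This is what a sunflower with
kernel `A` and more than `s` petals provides. -/
def IsKernel (F : Finset (Finset α)) (s : ℕ) (A : Finset α) : Prop :=
  ∀ W : Finset α, #W ≤ s → ∃ E ∈ F, A ⊆ E ∧ E ∩ W ⊆ A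

/-- The graph whose edges are the two-element kernels of `F` of strength `s`. -/
def kernelGraph (F : Finset (Finset α)) (s : ℕ) : SimpleGraph α where
  Adj x y := x ≠ y ∧ IsKernel F s {x, y}
  symm := ⟨fun x y h => ⟨h.1.symm, pair_comm x y ▸ h.2⟩⟩
  loopless := ⟨fun _ h => h.1 rfl⟩

variable {F G : Finset (Finset α)} {A B E V W : Finset α} {k l s : ℕ} {x y : α}

namespace IsKernel

theorem mono (h : IsKernel F s A) (hFG : F ⊆ G) {r : ℕ} (hr : r ≤ s) : IsKernel G r A :=
  fun W hW =>
    let ⟨E, hE, hAE, hEW⟩ := h W (hW.trans hr)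
    ⟨E, hFG hE, hAE, hEW⟩

theorem exists_inter_eq (h : IsKernel F s A) (hW : #W ≤ s) :
    ∃ E ∈ F, A ⊆ E ∧ E ∩ W = A ∩ W := by
  obtain ⟨E, hE, hAE, hEW⟩ := h W hW
  exact ⟨E, hE, hAE, Subset.antisymm (subset_inter hEW inter_subset_right)
    (inter_subset_inter_right hAE)⟩

theorem exists_edge (h : IsKernel F s A) : ∃ E ∈ F, A ⊆ E :=
  let ⟨E, hE, hAE, _⟩ := h ∅ (Nat.zero_le _)
  ⟨E, hE, hAE⟩

theorem hasLinearPath_two_of_edge (h : IsKernel F s A) (hE : E ∈ F) (hs : #E ≤ s)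
    (hAE : #(A ∩ E) = 1) : HasLinearPath F 2 := by
  obtain ⟨E', hE', -, hE'E⟩ := h.exists_inter_eq hs
  exact hasLinearPath_two hE' hE (hE'E ▸ hAE)

theorem hasLinearPath_two (hA : IsKernel F s A) (hB : IsKernel F s B) (hF : ∀ E ∈ F, #E ≤ s)
    (hAB : #(A ∩ B) = 1) : HasLinearPath F 2 := by
  have hAs : #A ≤ s := by
    obtain ⟨E, hE, hAE⟩ := hA.exists_edge
    exact (card_le_card hAE).trans (hF E hE)
  obtain ⟨E, hE, -, hEA⟩ := hB.exists_inter_eq hAs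
  exact hA.hasLinearPath_two_of_edge hE (hF E hE) (by rwa [inter_comm, hEA, inter_comm])

end IsKernel

theorem exists_linearPathTo_of_singleton_kernels (hF : ∀ E ∈ F, #E = k) {S : Set α}
    (hS : S.Nonempty) (hker : ∀ x ∈ S, IsKernel F s {x})
    (hedge : ∀ E ∈ F, ∀ x ∈ E, x ∈ S → ∃ y ∈ E, y ≠ x ∧ y ∈ S) :
    ∀ {l : ℕ}, l * k + 1 ≤ s → ∃ W, ∃ x ∈ S, LinearPathTo F l W x
  | 0, _ => let ⟨x, hx⟩ := hS; ⟨{x}, x, hx, .nil F x⟩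
  | l + 1, hs => by
    have hlk : l * k ≤ (l + 1) * k := Nat.mul_le_mul_right _ l.le_succ
    obtain ⟨W, x, hx, hW⟩ := exists_linearPathTo_of_singleton_kernels hF hS hker hedge
      (show l * k + 1 ≤ s by omega)
    obtain ⟨E, hE, hxE, hEW⟩ := hker x hx W ((hW.card_le hF).trans (by omega))
    rw [singleton_subset_iff] at hxE
    obtain ⟨y, hy, hyx, hyS⟩ := hedge E hE x hxE hx
    exact ⟨W ∪ E, y, hyS, hW.extend hE hxE hEW hy hyx⟩

theorem LinearPathTo.append_walk (hF : ∀ E ∈ F, #E = k) {p : (kernelGraph F s).Walk x y}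
    (hp : p.IsPath) (hW : LinearPathTo F l W x) (hWp : W ∩ p.support.toFinset ⊆ {x})
    (hs : (l + p.length) * (k + 1) + 1 ≤ s) : HasLinearPath F (l + p.length) := by
  induction p generalizing l W with
  | nil => exact hW.hasLinearPath
  | @cons x z y hadj p ih =>
    rw [SimpleGraph.Walk.cons_isPath_iff] at hp
    rw [SimpleGraph.Walk.length_cons] at hs ⊢
    have hsupp : #p.support.toFinset ≤ p.length + 1 :=
      (List.toFinset_card_le _).trans p.length_support.le
    obtain ⟨E, hE, hxz, hEW⟩ := hadj.2 (W ∪ p.support.toFinset) <| by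
      have := hW.card_le hF
      have := card_union_le W p.support.toFinset
      nlinarith
    have hxE : x ∈ E := hxz (mem_insert_self _ _)
    have hzE : z ∈ E := hxz (by simp)
    have hzp : z ∈ p.support := p.start_mem_support
    have hzW : z ∉ W := fun h => hadj.1 <| .symm <| mem_singleton.1 <| hWp <| by simp [h, hzp]
    have hEW' : E ∩ W ⊆ {x} := by grind
    have hWEp : (W ∪ E) ∩ p.support.toFinset ⊆ {z} := by
      have hWx : W ∩ p.support.toFinset ⊆ {x} := by
        refine Subset.trans (inter_subset_inter_left ?_) hWp
        simp only [SimpleGraph.Walk.support_cons, List.toFinset_cons, subset_insert]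
      have hxp : x ∉ p.support.toFinset := by simpa using hp.2
      intro v hv
      have hvW := @hWx v
      have hvE := @hEW v
      grind
    have hrec := ih hp.1 (hW.extend hE hxE hEW' hzE hadj.1.symm) hWEp
      (by rwa [add_right_comm, add_assoc])
    rwa [add_right_comm, add_assoc] at hrec

theorem hasLinearPath_of_kernelGraph_isPath (hF : ∀ E ∈ F, #E = k)
    {p : (kernelGraph F s).Walk x y} (hp : p.IsPath) (hs : p.length * (k + 1) + 1 ≤ s) :
    HasLinearPath F p.length := by
  have := (LinearPathTo.nil F x).append_walk hF hp inter_subset_left (by rwa [zero_add])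
  rwa [zero_add] at this

theorem card_filter_subset_sdiff_le (hF : F ⊆ V.powersetCard k) (p N : Finset α) :
    #{E ∈ F | p ⊆ E ∧ E \ p ⊆ N} ≤ (#N).choose (k - #p) := by
  rw [← card_powersetCard]
  refine card_le_card_of_injOn (· \ p) (fun E hE => ?_) fun E hE E' hE' h => ?_
  · obtain ⟨hEF, hpE, hEN⟩ := mem_filter.1 hE
    refine mem_powersetCard.2 ⟨hEN, ?_⟩
    rw [card_sdiff_of_subset hpE, (mem_powersetCard.1 (hF hEF)).2]
  · rw [← sdiff_union_of_subset (mem_filter.1 hE).2.1,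
      ← sdiff_union_of_subset (mem_filter.1 hE').2.1]
    exact congrArg (· ∪ p) h

theorem card_filter_subset_le (hF : F ⊆ V.powersetCard k) (A : Finset α) :
    #{E ∈ F | A ⊆ E} ≤ #V ^ (k - #A) := by
  have hsdiff : ∀ E ∈ F, A ⊆ E → A ⊆ E ∧ E \ A ⊆ V := fun E hE hAE =>
    ⟨hAE, sdiff_subset.trans (mem_powersetCard.1 (hF hE)).1⟩
  calc #{E ∈ F | A ⊆ E} ≤ #{E ∈ F | A ⊆ E ∧ E \ A ⊆ V} :=
        card_le_card fun E hE =>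
          mem_filter.2 ⟨(mem_filter.1 hE).1, hsdiff E (mem_filter.1 hE).1 (mem_filter.1 hE).2⟩
    _ ≤ (#V).choose (k - #A) := card_filter_subset_sdiff_le hF A V
    _ ≤ #V ^ (k - #A) := Nat.choose_le_pow _ _

theorem exists_popular_vertex_of_not_isKernel (hA : ¬ IsKernel F s A)
    (hne : {E ∈ F | A ⊆ E}.Nonempty) :
    ∃ w ∉ A, #{E ∈ F | A ⊆ E} ≤ s * #{E ∈ F | insert w A ⊆ E} := by
  unfold IsKernel at hA
  push Not at hA
  obtain ⟨W, hW, hmeet⟩ := hA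
  have hcover : {E ∈ F | A ⊆ E} ⊆ (W \ A).biUnion fun w => {E ∈ F | insert w A ⊆ E} := by
    intro E hE
    obtain ⟨hEF, hAE⟩ := mem_filter.1 hE
    obtain ⟨w, hw, hwA⟩ := not_subset.1 (hmeet E hEF hAE)
    obtain ⟨hwE, hwW⟩ := mem_inter.1 hw
    exact mem_biUnion.2 ⟨w, mem_sdiff.2 ⟨hwW, hwA⟩, mem_filter.2 ⟨hEF, insert_subset hwE hAE⟩⟩
  have hWA : (W \ A).Nonempty := (biUnion_nonempty.1 (hne.mono hcover)).imp fun _ h => h.1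
  obtain ⟨w, hw, hmax⟩ := exists_max_image (W \ A) (fun w => #{E ∈ F | insert w A ⊆ E}) hWA
  refine ⟨w, (mem_sdiff.1 hw).2, ?_⟩
  calc #{E ∈ F | A ⊆ E} ≤ #(W \ A) * #{E ∈ F | insert w A ⊆ E} :=
        (card_le_card hcover).trans (card_biUnion_le_card_mul _ _ _ hmax)
    _ ≤ s * #{E ∈ F | insert w A ⊆ E} :=
        Nat.mul_le_mul_right _ ((card_le_card sdiff_subset).trans hW)

theorem card_filter_subset_le_of_not_isKernel (hF : F ⊆ V.powersetCard k)
    (hA : ¬ IsKernel F s A) : #{E ∈ F | A ⊆ E} ≤ s * #V ^ (k - #A - 1) := by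
  rcases {E ∈ F | A ⊆ E}.eq_empty_or_nonempty with hempty | hne
  · simp only [hempty, card_empty, zero_le]
  obtain ⟨w, hwA, hw⟩ := exists_popular_vertex_of_not_isKernel hA hne
  calc #{E ∈ F | A ⊆ E} ≤ s * #{E ∈ F | insert w A ⊆ E} := hw
    _ ≤ s * #V ^ (k - #A - 1) := by
      gcongr
      have := card_filter_subset_le hF (insert w A)
      rwa [card_insert_of_notMem hwA, ← Nat.sub_sub] at this

end Kernel

/-! ### Homogeneous subfamilies -/

section SumLemmas

variable {α ι : Type*} {J : Finset ι}

theorem sum_card_update_union [DecidableEq ι] [DecidableEq α] {R : ι → Finset α} {T : ι}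
    (hT : T ∈ J) {D : Finset α} (hD : Disjoint (R T) D) :
    ∑ U ∈ J, #(Function.update R T (R T ∪ D) U) = ∑ U ∈ J, #(R U) + #D := by
  have hrest : ∀ U ∈ J.erase T, #(Function.update R T (R T ∪ D) U) = #(R U) := fun U hU => by
    rw [Function.update_of_ne (ne_of_mem_erase hU)]
  rw [← add_sum_erase _ _ hT, ← add_sum_erase J (fun U => #(R U)) hT, Function.update_self,
    card_union_of_disjoint hD, sum_congr rfl hrest]
  omega

theorem exists_le_mul_of_le_add_mul_sum {a : ι → ℕ} {b c m s : ℕ} (hJ : #J ≤ m)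
    (hc : c ≤ b + s * ∑ i ∈ J, a i) (hb : (1 + s * m) * b < c) :
    ∃ i ∈ J, c ≤ (1 + s * m) * a i := by
  by_contra! ha
  have hsum : (1 + s * m) * ∑ i ∈ J, a i ≤ m * c := calc
    (1 + s * m) * ∑ i ∈ J, a i ≤ #J • c := by
      rw [mul_sum]; exact sum_le_card_nsmul _ _ _ fun i hi => (ha i hi).le
    _ ≤ m * c := Nat.mul_le_mul_right _ hJ
  have hc' := Nat.mul_le_mul_left (1 + s * m) hc
  have hsum' := Nat.mul_le_mul_left s hsum
  nlinarith

end SumLemmas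

section ColorPart

variable {α ι : Type*} [DecidableEq ι]

/-- The vertices of `E` whose colour under `χ` lies in `T`. -/
def colorPart (χ : α → ι) (T : Finset ι) (E : Finset α) : Finset α := {x ∈ E | χ x ∈ T}

variable {χ : α → ι} {T : Finset ι} {A E : Finset α}

theorem colorPart_subset : colorPart χ T E ⊆ E := filter_subset _ _

theorem image_colorPart (hE : Set.SurjOn χ E Set.univ) : (colorPart χ T E).image χ = T := by
  ext c
  obtain ⟨x, hx, rfl⟩ := hE (Set.mem_univ c)
  simp only [colorPart, mem_image, mem_filter]
  exact ⟨fun ⟨_, ⟨_, hyT⟩, hyx⟩ => hyx ▸ hyT, fun hxT => ⟨x, ⟨hx, hxT⟩, rfl⟩⟩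

theorem colorPart_image (hE : Set.InjOn χ E) (hA : A ⊆ E) : colorPart χ (A.image χ) E = A := by
  ext x
  simp only [colorPart, mem_image, mem_filter]
  refine ⟨fun ⟨hx, y, hy, hyx⟩ => hE (hA hy) hx hyx ▸ hy, fun hx => ⟨hA hx, x, hx, rfl⟩⟩

theorem card_colorPart (hE : Set.BijOn χ E Set.univ) : #(colorPart χ T E) = #T := by
  rw [← card_image_of_injOn (hE.injOn.mono (coe_subset.2 colorPart_subset)),
    image_colorPart hE.surjOn]

end ColorPart

section Homogeneous

variable {α ι : Type*} [DecidableEq α] [DecidableEq ι]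

/-- No two distinct members of `H` intersect in a set whose colour set is exactly `T`. -/
def AvoidsColorSet (χ : α → ι) (H : Finset (Finset α)) (T : Finset ι) : Prop :=
  ∀ E ∈ H, ∀ E' ∈ H, E ≠ E' → (E ∩ E').image χ ≠ T

/-- Füredi's homogeneous families: each colour occurs exactly once on each edge, and `J`, the
intersection structure, contains all colour sets of intersections of distinct edges.
For every `T ∈ J` the `T`-coloured part of every edge is a kernel. -/
structure IsHomogeneous [Fintype ι] (s : ℕ) (χ : α → ι) (H : Finset (Finset α))
    (J : Finset (Finset ι)) : Prop where
  bijOn : ∀ E ∈ H, Set.BijOn χ E Set.univ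
  univ_notMem : univ ∉ J
  isKernel : ∀ T ∈ J, ∀ E ∈ H, IsKernel H s (colorPart χ T E)
  avoids : ∀ T ∉ J, AvoidsColorSet χ H T

variable {s : ℕ} {χ : α → ι} {H R : Finset (Finset α)} {J : Finset (Finset ι)} {T : Finset ι}

theorem AvoidsColorSet.mono (h : AvoidsColorSet χ H T) (hR : R ⊆ H) : AvoidsColorSet χ R T :=
  fun E hE E' hE' => h E (hR hE) E' (hR hE')

theorem inter_eq_of_image_inter_eq {A E E' : Finset α} (hE : Set.InjOn χ E) (hAE : A ⊆ E)
    (h : (E ∩ E').image χ = A.image χ) : E ∩ E' = A := by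
  rw [← colorPart_image hE hAE, ← h, colorPart_image hE inter_subset_left]

theorem AvoidsColorSet.union_star (hH : ∀ E ∈ H, Set.InjOn χ E) {A : Finset α} {w : α}
    (hwA : w ∉ A) (hR : R ⊆ {E ∈ H | ¬ A ⊆ E}) (h : AvoidsColorSet χ R (A.image χ)) :
    AvoidsColorSet χ (R ∪ {E ∈ H | insert w A ⊆ E}) (A.image χ) := by
  have hcross : ∀ E ∈ {E ∈ H | insert w A ⊆ E}, ∀ E' ∈ R ∪ {E ∈ H | insert w A ⊆ E},
      (E ∩ E').image χ ≠ A.image χ := by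
    intro E hE E' hE' himage
    obtain ⟨hEH, hwE⟩ := mem_filter.1 hE
    have hEE' := inter_eq_of_image_inter_eq (hH E hEH) ((subset_insert w A).trans hwE) himage
    rcases mem_union.1 hE' with hE' | hE'
    · exact (mem_filter.1 (hR hE')).2 (hEE' ▸ inter_subset_right)
    · refine hwA (hEE' ▸ mem_inter.2 ⟨hwE (mem_insert_self _ _), ?_⟩)
      exact (mem_filter.1 hE').2 (mem_insert_self _ _)
  intro E hE E' hE' hne
  rcases mem_union.1 hE with hER | hEw
  · rcases mem_union.1 hE' with hER' | hEw'
    · exact h E hER E' hER' hne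
    · exact inter_comm E' E ▸ hcross E' hEw' E hE
  · exact hcross E hEw E' hE'

/- Delete the star of a non-kernel `T`-coloured part as long as there is one: the edges of the star
through a popular vertex join the `T`-avoiding family `R T`. -/
theorem exists_kernels_and_avoiding (s : ℕ) (J : Finset (Finset ι))
    (H : Finset (Finset α)) (hH : ∀ E ∈ H, Set.BijOn χ E Set.univ) :
    ∃ H₀ ⊆ H, (∀ T ∈ J, ∀ E ∈ H₀, IsKernel H₀ s (colorPart χ T E)) ∧
      ∃ R : Finset ι → Finset (Finset α), (∀ T, R T ⊆ H) ∧ (∀ T, AvoidsColorSet χ (R T) T) ∧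
        #H ≤ #H₀ + s * ∑ T ∈ J, #(R T) := by
  induction H using Finset.strongInduction with
  | H H ih =>
  by_cases hgood : ∀ T ∈ J, ∀ E ∈ H, IsKernel H s (colorPart χ T E)
  · exact ⟨H, Subset.rfl, hgood, fun _ => ∅, by simp, by simp [AvoidsColorSet], by simp⟩
  push Not at hgood
  obtain ⟨T, hT, E, hE, hker⟩ := hgood
  set A := colorPart χ T E with hA
  have hAT : A.image χ = T := image_colorPart (hH E hE).surjOn
  have hEstar : E ∈ {E ∈ H | A ⊆ E} := mem_filter.2 ⟨hE, colorPart_subset⟩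
  obtain ⟨w, hwA, hw⟩ := exists_popular_vertex_of_not_isKernel hker ⟨E, hEstar⟩
  obtain ⟨H₀, hH₀, hker₀, R, hRH, hR, hcard⟩ := ih {E ∈ H | ¬ A ⊆ E}
    (filter_ssubset.2 ⟨E, hE, not_not.2 colorPart_subset⟩) fun E hE => hH E (mem_filter.1 hE).1
  refine ⟨H₀, hH₀.trans (filter_subset _ _), hker₀,
    Function.update R T (R T ∪ {E ∈ H | insert w A ⊆ E}), fun U => ?_, fun U => ?_, ?_⟩
  · rcases eq_or_ne U T with rfl | hU
    · rw [Function.update_self]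
      exact union_subset ((hRH _).trans (filter_subset _ _)) (filter_subset _ _)
    · exact Function.update_of_ne hU _ R ▸ (hRH _).trans (filter_subset _ _)
  · rcases eq_or_ne U T with rfl | hU
    · rw [Function.update_self, ← hAT]
      exact AvoidsColorSet.union_star (fun E hE => (hH E hE).injOn) hwA (hAT ▸ hRH _) (hAT ▸ hR _)
    · exact Function.update_of_ne hU _ R ▸ hR U
  · have hdisj : Disjoint (R T) {E ∈ H | insert w A ⊆ E} := disjoint_left.2 fun E' hE' hwE' =>
      (mem_filter.1 (hRH _ hE')).2 ((subset_insert w A).trans (mem_filter.1 hwE').2)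
    rw [sum_card_update_union hT hdisj, mul_add, ← card_filter_add_card_filter_not (A ⊆ ·)]
    omega

theorem exists_kernels_of_avoids {m : ℕ} (J : Finset (Finset ι)) (hJm : #J ≤ m)
    (H : Finset (Finset α)) (hH : ∀ E ∈ H, Set.BijOn χ E Set.univ)
    (hJ : ∀ T ∉ J, AvoidsColorSet χ H T) :
    ∃ H' ⊆ H, ∃ J' ⊆ J, #H ≤ (1 + s * m) ^ (#J + 1) * #H' ∧
      (∀ T ∈ J', ∀ E ∈ H', IsKernel H' s (colorPart χ T E)) ∧
      ∀ T ∉ J', AvoidsColorSet χ H' T := by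
  induction hn : #J generalizing J H with
  | zero =>
    obtain rfl := card_eq_zero.1 hn
    exact ⟨H, Subset.rfl, ∅, Subset.rfl, Nat.le_mul_of_pos_left _ (by positivity),
      by simp, hJ⟩
  | succ n ih =>
    obtain ⟨H₀, hH₀, hker, R, hRH, hR, hcard⟩ := exists_kernels_and_avoiding s J H hH
    rcases le_or_gt #H ((1 + s * m) * #H₀) with hbig | hsmall
    · exact ⟨H₀, hH₀, J, Subset.rfl,
        hbig.trans (Nat.mul_le_mul_right _ (Nat.le_self_pow (by omega) _)), hker,
        fun T hT => (hJ T hT).mono hH₀⟩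
    obtain ⟨T, hT, hRT⟩ := exists_le_mul_of_le_add_mul_sum hJm hcard hsmall
    have hJT : #(J.erase T) = n := by rw [card_erase_of_mem hT]; omega
    have havoid : ∀ U ∉ J.erase T, AvoidsColorSet χ (R T) U := fun U hU => by
      rcases eq_or_ne U T with rfl | hne
      · exact hR _
      · exact (hJ U fun h => hU (mem_erase.2 ⟨hne, h⟩)).mono (hRH _)
    obtain ⟨H', hH', J', hJ', hcard', hker', havoid'⟩ := ih (J.erase T) (by omega) (R T)
      (fun E hE => hH E (hRH _ hE)) havoid hJT
    refine ⟨H', hH'.trans (hRH _), J', hJ'.trans (erase_subset _ _), ?_, hker', havoid'⟩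
    calc #H ≤ (1 + s * m) * #(R T) := hRT
      _ ≤ (1 + s * m) * ((1 + s * m) ^ (n + 1) * #H') := Nat.mul_le_mul_left _ hcard'
      _ = (1 + s * m) ^ (n + 1 + 1) * #H' := by ring

end Homogeneous

section Rainbow

variable {α ι : Type*} [Fintype ι]

open Classical in
theorem card_fun_le_mul_card_bijOn [Fintype α] {E : Finset α} (hE : #E = Fintype.card ι) :
    Fintype.card (α → ι) ≤ Fintype.card ι ^ Fintype.card ι *
      #{χ : α → ι | Set.BijOn χ (E : Set α) Set.univ} := by
  let e : E ≃ ι := Fintype.equivOfCardEq (by rw [Fintype.card_coe, hE])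
  let restrict := Equiv.piEquivPiSubtypeProd (· ∈ E) fun _ : α => ι
  have hbij : ∀ g, Set.BijOn (restrict.symm (e, g)) E Set.univ := fun g => by
    have hval : ∀ x : E, restrict.symm (e, g) x = e x := fun x => by simp [restrict]
    refine ⟨Set.mapsTo_univ _ _, fun x hx y hy hxy => ?_, fun c _ => ?_⟩
    · rw [hval ⟨x, hx⟩, hval ⟨y, hy⟩] at hxy
      exact congrArg Subtype.val (e.injective hxy)
    · exact ⟨e.symm c, (e.symm c).2, by rw [hval, e.apply_symm_apply]⟩
  calc Fintype.card (α → ι)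
      = Fintype.card (E → ι) * Fintype.card ({x // x ∉ E} → ι) := by
        rw [Fintype.card_congr restrict, Fintype.card_prod]
    _ = Fintype.card ι ^ Fintype.card ι * #(univ : Finset ({x // x ∉ E} → ι)) := by
        rw [Fintype.card_fun, Fintype.card_coe, hE, card_univ]
    _ ≤ _ := Nat.mul_le_mul_left _ <| card_le_card_of_injOn (fun g => restrict.symm (e, g))
        (fun g _ => mem_filter.2 ⟨mem_univ _, hbij g⟩) fun g _ g' _ h => by simpa using h

variable [Nonempty ι]

open Classical in
theorem exists_coloring_of_finite [Finite α] {F : Finset (Finset α)}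
    (hF : ∀ E ∈ F, #E = Fintype.card ι) :
    ∃ χ : α → ι, #F ≤ Fintype.card ι ^ Fintype.card ι *
      #(F.filter fun E : Finset α => Set.BijOn χ E Set.univ) := by
  cases nonempty_fintype α
  refine (exists_le_of_sum_le (univ_nonempty (α := α → ι)) ?_).imp fun χ => And.right
  calc ∑ _χ : α → ι, #F = ∑ _E ∈ F, Fintype.card (α → ι) := by simp [mul_comm]
    _ ≤ ∑ E ∈ F, Fintype.card ι ^ Fintype.card ι *
        #{χ : α → ι | Set.BijOn χ (E : Set α) Set.univ} :=
      sum_le_sum fun E hE => card_fun_le_mul_card_bijOn (hF E hE)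
    _ = ∑ χ : α → ι, Fintype.card ι ^ Fintype.card ι *
        #(F.filter fun E : Finset α => Set.BijOn χ E Set.univ) := by
      simp only [← mul_sum, card_filter]
      rw [sum_comm]

theorem exists_coloring (F : Finset (Finset α)) (hF : ∀ E ∈ F, #E = Fintype.card ι) :
    ∃ χ : α → ι, ∃ H ⊆ F, (∀ E ∈ H, Set.BijOn χ E Set.univ) ∧
      #F ≤ Fintype.card ι ^ Fintype.card ι * #H := by
  classical
  set V : Finset α := F.biUnion id
  have hrestrict : ∀ E ∈ F, (E.subtype (· ∈ V)).map (.subtype _) = E := fun E hE =>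
    subtype_map_of_mem fun x hx => mem_biUnion.2 ⟨E, hE, hx⟩
  have hinj : Set.InjOn (Finset.subtype (· ∈ V)) F := fun E hE E' hE' h => by
    rw [← hrestrict E hE, ← hrestrict E' hE', h]
  have hcard : ∀ E ∈ F.image (Finset.subtype (· ∈ V)), #E = Fintype.card ι :=
    forall_mem_image.2 fun E hE => by rw [← hF E hE, ← card_map (.subtype _), hrestrict E hE]
  obtain ⟨χ, hχ⟩ := exists_coloring_of_finite hcard
  rw [card_image_of_injOn hinj, filter_image, card_image_of_injOn
    (hinj.mono (coe_subset.2 (filter_subset _ _)))] at hχ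
  let χ' := Function.extend Subtype.val χ fun _ => Classical.arbitrary ι
  refine ⟨χ', _, filter_subset _ _, fun E hE => ?_, hχ⟩
  obtain ⟨hEF, hbij⟩ := mem_filter.1 hE
  have hcomp : χ = χ' ∘ Subtype.val := (Function.extend_comp Subtype.val_injective _ _).symm
  rw [hcomp] at hbij
  have hmaps := (Set.bijOn_comp_iff Subtype.val_injective.injOn).1 hbij
  rwa [← hrestrict E hEF, coe_map]

end Rainbow

theorem exists_isHomogeneous (ι : Type*) [Fintype ι] [DecidableEq ι] [Nonempty ι] (s : ℕ) :
    ∃ C : ℕ, ∀ (α : Type u) [DecidableEq α] (F : Finset (Finset α)),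
      (∀ E ∈ F, #E = Fintype.card ι) →
      ∃ (χ : α → ι) (H : Finset (Finset α)) (J : Finset (Finset ι)),
        H ⊆ F ∧ #F ≤ C * #H ∧ IsHomogeneous s χ H J := by
  set J₀ : Finset (Finset ι) := univ.erase univ
  refine ⟨Fintype.card ι ^ Fintype.card ι * (1 + s * #J₀) ^ (#J₀ + 1), fun α _ F hF => ?_⟩
  obtain ⟨χ, H, hHF, hbij, hcard⟩ := exists_coloring (ι := ι) F hF
  obtain ⟨H', hH', J, hJ, hcard', hker, havoid⟩ :=
    exists_kernels_of_avoids (s := s) J₀ le_rfl H hbij fun T hT E hE E' hE' hne himage => by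
      obtain rfl : T = univ := by simpa [J₀] using hT
      have hE_image : E.image χ = univ := by
        rw [← coe_eq_univ, coe_image, (hbij E hE).image_eq]
      have hEE' :=
        inter_eq_of_image_inter_eq (hbij E hE).injOn Subset.rfl (himage.trans hE_image.symm)
      have hcardE : #E' ≤ #E := by rw [hF E (hHF hE), hF E' (hHF hE')]
      exact hne (eq_of_subset_of_card_le (inter_eq_left.1 hEE') hcardE)
  refine ⟨χ, H', J, hH'.trans hHF, ?_, fun E hE => hbij E (hH' hE), fun h => ?_, hker, havoid⟩
  · calc #F ≤ _ := hcard
      _ ≤ _ := Nat.mul_le_mul_left _ hcard'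
      _ = _ := (mul_assoc _ _ _).symm
  · exact (mem_erase.1 (hJ h)).1 rfl

namespace IsHomogeneous

variable {α ι : Type*} [DecidableEq α] [Fintype ι] [DecidableEq ι] {s : ℕ} {χ : α → ι}
  {H : Finset (Finset α)} {J : Finset (Finset ι)} {T : Finset ι} {E : Finset α}

theorem card_eq (h : IsHomogeneous s χ H J) (hE : E ∈ H) : #E = Fintype.card ι := by
  rw [← card_univ, ← card_colorPart (T := univ) (h.bijOn E hE), colorPart]
  simp only [mem_univ, filter_true]

theorem infClosed (h : IsHomogeneous s χ H J) (hH : H.Nonempty) (hs : 2 * Fintype.card ι ≤ s) :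
    InfClosed (J : Set (Finset ι)) := by
  intro T₁ hT₁ T₂ hT₂
  obtain ⟨E, hE⟩ := hH
  have hEs : #E ≤ s := by rw [h.card_eq hE]; omega
  obtain ⟨E₁, hE₁, -, hEE₁⟩ := (h.isKernel T₁ hT₁ E hE).exists_inter_eq hEs
  have hE₁s : #(E ∪ E₁) ≤ s := by
    have := card_union_le E E₁
    rw [h.card_eq hE, h.card_eq hE₁] at this
    omega
  obtain ⟨E₂, hE₂, -, hEE₂⟩ := (h.isKernel T₂ hT₂ E₁ hE₁).exists_inter_eq hE₁s
  have hinter : E ∩ E₂ = colorPart χ (T₁ ∩ T₂) E := by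
    ext z
    have h₁ := Finset.ext_iff.1 hEE₁ z
    have h₂ := Finset.ext_iff.1 hEE₂ z
    simp only [colorPart, mem_inter, mem_filter, mem_union] at h₁ h₂ ⊢
    tauto
  have himage : (E ∩ E₂).image χ = T₁ ∩ T₂ := hinter ▸ image_colorPart (h.bijOn E hE).surjOn
  by_contra hT
  rcases eq_or_ne E E₂ with rfl | hne
  · have huniv : univ ⊆ T₁ ∩ T₂ := by
      rw [← himage, inter_self, ← coe_subset, coe_image, (h.bijOn E hE).image_eq, coe_univ]
    exact h.univ_notMem (univ_subset_iff.1 (huniv.trans inter_subset_left) ▸ hT₁)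
  · exact h.avoids _ hT E hE E₂ hE₂ hne himage

theorem injOn_colorPart (h : IsHomogeneous s χ H J) (hT : ∀ U ∈ J, ¬ T ⊆ U) :
    Set.InjOn (colorPart χ T) H := by
  intro E hE E' hE' hEE'
  by_contra hne
  have hsub : T ⊆ (E ∩ E').image χ := by
    rw [← image_colorPart (T := T) (h.bijOn E hE).surjOn]
    exact image_subset_image (subset_inter colorPart_subset (hEE' ▸ colorPart_subset))
  by_cases hJ : (E ∩ E').image χ ∈ J
  · exact hT _ hJ hsub
  · exact h.avoids _ hJ E hE E' hE' hne rfl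

theorem isKernel_of_image_mem (h : IsHomogeneous s χ H J) (hE : E ∈ H) {A : Finset α}
    (hAE : A ⊆ E) (hA : A.image χ ∈ J) : IsKernel H s A :=
  colorPart_image (h.bijOn E hE).injOn hAE ▸ h.isKernel _ hA E hE

theorem hasLinearPath_of_two_singletons (h : IsHomogeneous s χ H J) (hH : H.Nonempty) {a b : ι}
    (hab : a ≠ b) (ha : {a} ∈ J) (hb : {b} ∈ J) {l : ℕ} (hs : l * Fintype.card ι + 1 ≤ s) :
    HasLinearPath H l := by
  have hcolor : ∀ E ∈ H, ∀ c, ∃ x ∈ E, χ x = c := fun E hE c =>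
    (h.bijOn E hE).surjOn (Set.mem_univ c)
  set S : Set α := {x | (∃ E ∈ H, x ∈ E) ∧ (χ x = a ∨ χ x = b)}
  have hker : ∀ x ∈ S, IsKernel H s {x} := by
    rintro x ⟨⟨E, hE, hx⟩, hxc⟩
    refine h.isKernel_of_image_mem hE (singleton_subset_iff.2 hx) ?_
    rcases hxc with hxc | hxc <;> rwa [image_singleton, hxc]
  have hnext : ∀ E ∈ H, ∀ x ∈ E, x ∈ S → ∃ y ∈ E, y ≠ x ∧ y ∈ S := by
    rintro E hE x _ ⟨-, hxa | hxb⟩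
    · obtain ⟨y, hy, hyb⟩ := hcolor E hE b
      exact ⟨y, hy, fun hyx => hab (by rw [← hxa, ← hyb, hyx]), ⟨E, hE, hy⟩, .inr hyb⟩
    · obtain ⟨y, hy, hya⟩ := hcolor E hE a
      exact ⟨y, hy, fun hyx => hab (by rw [← hya, ← hxb, hyx]), ⟨E, hE, hy⟩, .inl hya⟩
  obtain ⟨E, hE⟩ := hH
  obtain ⟨x₀, hx₀, hx₀a⟩ := hcolor E hE a
  obtain ⟨W, x, -, hW⟩ := exists_linearPathTo_of_singleton_kernels (fun E => h.card_eq)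
    (S := S) ⟨x₀, ⟨E, hE, hx₀⟩, .inl hx₀a⟩ hker hnext hs
  exact hW.hasLinearPath

theorem hasLinearPath_two_of_singleton (h : IsHomogeneous s χ H J) (hH : H.Nonempty) {a : ι}
    (ha : {a} ∈ J) (hs : Fintype.card ι ≤ s) : HasLinearPath H 2 := by
  obtain ⟨E, hE⟩ := hH
  refine (h.isKernel _ ha E hE).hasLinearPath_two_of_edge hE ((h.card_eq hE).trans_le hs) ?_
  rw [inter_eq_left.2 colorPart_subset, card_colorPart (h.bijOn E hE), card_singleton]

end IsHomogeneous

/-! ### Intersection structures -/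

section IntersectionStructure

variable {ι : Type*} [Fintype ι] [DecidableEq ι] {J : Finset (Finset ι)} {A D : Finset ι} {d : ℕ}

/-- Every set of codimension `d` lies in a member of `J`. -/
def CoversCodim (J : Finset (Finset ι)) (d : ℕ) : Prop :=
  ∀ D : Finset ι, #D = d → ∃ U ∈ J, Dᶜ ⊆ U

/-- The members `M z` of `J`, for `z ∉ D`, contain the complement of `D` except for `z` itself. -/
def SeparatesOutside (J : Finset (Finset ι)) (D : Finset ι) (M : ι → Finset ι) : Prop :=
  ∀ z ∉ D, M z ∈ J ∧ (insert z D)ᶜ ⊆ M z ∧ z ∉ M z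

theorem CoversCodim.exists_separatesOutside (h : CoversCodim J (#D + 1))
    (hD : ∀ U ∈ J, ¬ Dᶜ ⊆ U) : ∃ M, SeparatesOutside J D M := by
  have hU : ∀ z, ∃ U, z ∉ D → U ∈ J ∧ (insert z D)ᶜ ⊆ U ∧ z ∉ U := fun z => by
    by_cases hz : z ∈ D
    · exact ⟨∅, fun h => absurd hz h⟩
    · obtain ⟨U, hU, hsub⟩ := h (insert z D) (card_insert_of_notMem hz)
      refine ⟨U, fun _ => ⟨hU, hsub, fun hzU => hD U hU fun w hw => ?_⟩⟩
      have hw' := @hsub w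
      grind [mem_compl]
  choose M hM using hU
  exact ⟨M, hM⟩

theorem mem_of_forall_notMem_separated (hJ : InfClosed (J : Set (Finset ι))) (hA : A ≠ univ)
    (h : ∀ y ∉ A, ∃ U ∈ J, A ⊆ U ∧ y ∉ U) : A ∈ J := by
  have hne : Aᶜ.Nonempty := by rwa [nonempty_iff_ne_empty, Ne, compl_eq_empty_iff]
  choose! U hUJ hAU hyU using h
  have hinf : Aᶜ.inf' hne U = A := by
    refine le_antisymm (fun y hy => ?_) (le_inf' _ _ fun y hy => hAU y (mem_compl.1 hy))
    by_contra hyA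
    exact hyU y hyA (inf'_le U (mem_compl.2 hyA) hy)
  exact hinf ▸ hJ.finsetInf'_mem hne fun y hy => hUJ y (mem_compl.1 hy)

theorem CoversCodim.mem_of_ne_univ (h : CoversCodim J 1) (hJ : InfClosed (J : Set (Finset ι)))
    (huniv : univ ∉ J) (hA : A ≠ univ) : A ∈ J := by
  refine mem_of_forall_notMem_separated hJ hA fun y hy => ?_
  obtain ⟨U, hU, hyU⟩ := h {y} (card_singleton y)
  refine ⟨U, hU, fun w hw => hyU (by grind [mem_compl]), fun hyU' => huniv ?_⟩
  have hUuniv : U = univ := eq_univ_of_forall fun w => by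
    have hw := @hyU w
    grind [mem_compl]
  exact hUuniv ▸ hU

theorem exists_dominating_of_singleton_notMem [Nontrivial ι] (hJ : InfClosed (J : Set (Finset ι)))
    {x : ι} (hx : {x} ∉ J) : ∃ y ≠ x, ∀ U ∈ J, x ∈ U → y ∈ U := by
  by_contra! h
  refine hx (mem_of_forall_notMem_separated hJ (singleton_ne_univ x) fun y hy => ?_)
  simpa only [singleton_subset_iff] using h y (notMem_singleton.1 hy)

namespace SeparatesOutside

variable {M : ι → Finset ι}

theorem mem_of_superset (hM : SeparatesOutside J D M) (hJ : InfClosed (J : Set (Finset ι)))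
    (hD : ∀ z ∉ D, D ⊆ M z) (hDA : D ⊆ A) (hA : A ≠ univ) : A ∈ J := by
  refine mem_of_forall_notMem_separated hJ hA fun y hy => ?_
  have hyD : y ∉ D := fun h => hy (hDA h)
  obtain ⟨hMJ, hsub, hyM⟩ := hM y hyD
  refine ⟨M y, hMJ, fun w hw => ?_, hyM⟩
  have hsub' := @hsub w
  have hD' := @hD y hyD w
  grind [mem_compl]

theorem exists_dominating_of_notMem [Nontrivial ι] (hM : SeparatesOutside J D M)
    (hJ : InfClosed (J : Set (Finset ι))) {x : ι} (hxD : x ∉ D) (hx : {x} ∉ J) :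
    ∃ y ∈ D, ∀ z ∉ D, z ≠ x → y ∈ M z := by
  obtain ⟨y, hyx, hy⟩ := exists_dominating_of_singleton_notMem hJ hx
  have hyM : ∀ z ∉ D, z ≠ x → y ∈ M z := fun z hz hzx =>
    hy _ (hM z hz).1 ((hM z hz).2.1 (by simp [hxD, hzx.symm]))
  by_cases hyD : y ∈ D
  · exact ⟨y, hyD, hyM⟩
  · exact absurd (hyM y hyD hyx) (hM y hyD).2.2

theorem exists_dominating_of_mem [Nontrivial ι] (hM : SeparatesOutside J D M)
    (hJ : InfClosed (J : Set (Finset ι))) {p : ι} (hp : {p} ∉ J) (hpM : ∀ z ∉ D, p ∈ M z) :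
    ∃ q ∈ D, q ≠ p ∧ ∀ z ∉ D, q ∈ M z := by
  obtain ⟨q, hqp, hq⟩ := exists_dominating_of_singleton_notMem hJ hp
  have hqM : ∀ z ∉ D, q ∈ M z := fun z hz => hq _ (hM z hz).1 (hpM z hz)
  by_cases hqD : q ∈ D
  · exact ⟨q, hqD, hqp, hqM⟩
  · exact absurd (hqM q hqD) (hM q hqD).2.2

theorem pair_subset [Nontrivial ι] (hM : SeparatesOutside J D M)
    (hJ : InfClosed (J : Set (Finset ι))) (hD : #D = 2) {p : ι} (hpD : p ∈ D) (hp : {p} ∉ J)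
    (hpM : ∀ z ∉ D, p ∈ M z) : ∀ z ∉ D, D ⊆ M z := by
  obtain ⟨q, hqD, hqp, hqM⟩ := hM.exists_dominating_of_mem hJ hp hpM
  have hDpq : {p, q} = D := eq_of_subset_of_card_le
    (insert_subset hpD (singleton_subset_iff.2 hqD)) (by rw [hD, card_pair hqp.symm])
  intro z hz
  exact hDpq ▸ insert_subset (hpM z hz) (singleton_subset_iff.2 (hqM z hz))

end SeparatesOutside

theorem exists_forall_mem_of_mem_of_coversCodim_two (hJ : InfClosed (J : Set (Finset ι)))
    (huniv : univ ∉ J) (hcard : 4 ≤ Fintype.card ι) (hcov : CoversCodim J 2)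
    (hone : {a | {a} ∈ J}.Subsingleton) : ∃ c, ∀ A, c ∈ A → A ≠ univ → A ∈ J := by
  have : Nontrivial ι := Fintype.one_lt_card_iff_nontrivial.1 (by omega)
  have hmissing : ∀ X : Finset ι, #X ≤ 2 → ∃ a ∉ X, {a} ∉ J := fun X hX => by
    have hXc : 1 < #Xᶜ := by rw [card_compl]; omega
    obtain ⟨a, ha, b, hb, hab⟩ := one_lt_card.1 hXc
    by_cases haJ : {a} ∈ J
    · exact ⟨b, mem_compl.1 hb, fun hbJ => hab (hone haJ hbJ)⟩
    · exact ⟨a, mem_compl.1 ha, haJ⟩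
  by_cases hcov₁ : CoversCodim J 1
  · exact ⟨Classical.arbitrary ι, fun A _ => hcov₁.mem_of_ne_univ hJ huniv⟩
  · obtain ⟨D, hD, hDU⟩ : ∃ D : Finset ι, #D = 1 ∧ ∀ U ∈ J, ¬ Dᶜ ⊆ U := by
      simpa [CoversCodim] using hcov₁
    obtain ⟨c, rfl⟩ := card_eq_one.1 hD
    obtain ⟨M, hM⟩ := CoversCodim.exists_separatesOutside (D := {c}) hcov hDU
    obtain ⟨a, ha, haJ⟩ := hmissing {c} (by simp)
    obtain ⟨b, hb, hbJ⟩ := hmissing {c, a} card_le_two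
    obtain ⟨hbc, hba⟩ : b ∉ ({c} : Finset ι) ∧ b ≠ a := by simpa using hb
    obtain ⟨y, hy, hyM⟩ := hM.exists_dominating_of_notMem hJ ha haJ
    obtain ⟨y', hy', hyM'⟩ := hM.exists_dominating_of_notMem hJ hbc hbJ
    obtain rfl := mem_singleton.1 hy
    obtain rfl := mem_singleton.1 hy'
    refine ⟨_, fun A hA => hM.mem_of_superset hJ (fun z hz => singleton_subset_iff.2 ?_)
      (singleton_subset_iff.2 hA)⟩
    by_cases hza : z = a
    · exact hyM' z hz (hza.trans_ne hba.symm)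
    · exact hyM z hz hza

theorem exists_singleton_mem_of_coversCodim_two (hJ : InfClosed (J : Set (Finset ι)))
    (huniv : univ ∉ J) (hcard : 4 ≤ Fintype.card ι) (hcov : CoversCodim J 2) :
    ∃ a, {a} ∈ J := by
  have : Nontrivial ι := Fintype.one_lt_card_iff_nontrivial.1 (by omega)
  by_contra! hnone
  obtain ⟨c, hc⟩ := exists_forall_mem_of_mem_of_coversCodim_two hJ huniv hcard hcov
    fun a ha => absurd ha (hnone a)
  exact hnone c (hc {c} (mem_singleton_self c) (singleton_ne_univ c))

theorem SeparatesOutside.eq_pair {M : ι → Finset ι} (hM : SeparatesOutside J D M) {a b p q : ι}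
    (hab : a ≠ b) (hD : D = {p, q}) (hDc : Dᶜ = {a, b}) (hq : q ∈ M a) (hp : p ∉ M a) :
    M a = {b, q} := by
  have hmem : ∀ z, z ∈ ({a, b} : Finset ι) ↔ z ∉ D := fun z => by rw [← hDc, mem_compl]
  obtain ⟨-, hsub, haM⟩ := hM a ((hmem a).1 (by simp))
  ext z
  have hz := hmem z
  have hzM := @hsub z
  grind [mem_compl]

theorem SeparatesOutside.exists_complementary_pairs {M : ι → Finset ι}
    (hM : SeparatesOutside J D M) {a b p q : ι} (hab : a ≠ b) (hpq : p ≠ q) (hD : D = {p, q})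
    (hDc : Dᶜ = {a, b}) (hpb : p ∈ M b) (hqa : q ∈ M a) (hpa : p ∉ M a) (hqb : q ∉ M b) :
    ∃ B : Finset ι, #B = 2 ∧ B ∈ J ∧ Bᶜ ∈ J := by
  have hmem : ∀ z, z ∈ ({a, b} : Finset ι) ↔ z ∉ D := fun z => by rw [← hDc, mem_compl]
  have hMa := hM.eq_pair hab hD hDc hqa hpa
  have hMb := hM.eq_pair hab.symm (hD.trans (pair_comm p q)) (hDc.trans (pair_comm a b)) hpb hqb
  have hcompl : (M a)ᶜ = M b := by
    ext z
    have hz := hmem z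
    have hp := hmem p
    grind [mem_compl]
  have haM := (hM a ((hmem a).1 (by simp))).1
  refine ⟨M a, ?_, haM, hcompl ▸ (hM b ((hmem b).1 (by simp))).1⟩
  have hb := hmem b
  rw [hMa, card_pair (by grind)]

theorem SeparatesOutside.exists_common_or_complementary_pairs [Nontrivial ι]
    {M : ι → Finset ι} (hM : SeparatesOutside J D M) (hJ : InfClosed (J : Set (Finset ι)))
    (hcard : 4 ≤ Fintype.card ι) (hnone : ∀ a, {a} ∉ J) (hD : #D = 2) :
    (∃ p ∈ D, ∀ z ∉ D, p ∈ M z) ∨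
      Fintype.card ι = 4 ∧ ∃ B : Finset ι, #B = 2 ∧ B ∈ J ∧ Bᶜ ∈ J := by
  by_cases hcommon : ∃ p ∈ D, ∀ z ∉ D, p ∈ M z
  · exact .inl hcommon
  choose! dom hdomD hdom using fun x (hx : x ∉ D) =>
    hM.exists_dominating_of_notMem hJ hx (hnone x)
  have hinj : Set.InjOn dom (Dᶜ : Finset ι) := fun x hx x' hx' hxx' => by
    rw [mem_coe, mem_compl] at hx hx'
    by_contra hne
    refine hcommon ⟨dom x, hdomD x hx, fun z hz => ?_⟩
    by_cases hzx : z = x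
    · exact hxx' ▸ hdom x' hx' z hz (hzx.trans_ne hne)
    · exact hdom x hx z hz hzx
  have hDc : #Dᶜ ≤ 2 := hD ▸ card_le_card_of_injOn dom (fun x hx => hdomD x (mem_compl.1 hx)) hinj
  have hDc_add := card_add_card_compl D
  obtain ⟨a, b, hab, hDab⟩ := card_eq_two.1 (show #Dᶜ = 2 by omega)
  have hDc_mem : ∀ z, z ∉ D ↔ z = a ∨ z = b := fun z => by rw [← mem_compl, hDab]; simp
  have ha : a ∉ D := (hDc_mem a).2 (.inl rfl)
  have hb : b ∉ D := (hDc_mem b).2 (.inr rfl)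
  have hdom_ne : dom a ≠ dom b := fun h => hab (hinj (mem_compl.2 ha) (mem_compl.2 hb) h)
  have hDdom : D = {dom a, dom b} := (eq_of_subset_of_card_le
    (insert_subset (hdomD a ha) (singleton_subset_iff.2 (hdomD b hb)))
    (by rw [hD, card_pair hdom_ne])).symm
  have hpb := hdom a ha b hb hab.symm
  have hqa := hdom b hb a ha hab
  refine .inr ⟨by omega, hM.exists_complementary_pairs hab hdom_ne hDdom hDab hpb hqa
    (fun hpa => hcommon ⟨_, hdomD a ha, fun z hz => by
      rcases (hDc_mem z).1 hz with rfl | rfl <;> assumption⟩)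
    fun hqb => hcommon ⟨_, hdomD b hb, fun z hz => by
      rcases (hDc_mem z).1 hz with rfl | rfl <;> assumption⟩⟩

theorem exists_pair_forall_superset_mem (hJ : InfClosed (J : Set (Finset ι))) (huniv : univ ∉ J)
    (hcard : 4 ≤ Fintype.card ι) (hcov : CoversCodim J 3) (hnone : ∀ a, {a} ∉ J) :
    ∃ D : Finset ι, #D = 2 ∧ ((∀ A, D ⊆ A → A ≠ univ → A ∈ J) ∨
      Fintype.card ι = 4 ∧ D ∈ J ∧ Dᶜ ∈ J) := by
  have : Nontrivial ι := Fintype.one_lt_card_iff_nontrivial.1 (by omega)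
  obtain ⟨D, hD, hDU⟩ : ∃ D : Finset ι, #D = 2 ∧ ∀ U ∈ J, ¬ Dᶜ ⊆ U := by
    by_contra! hcov₂
    obtain ⟨a, ha⟩ := exists_singleton_mem_of_coversCodim_two hJ huniv hcard hcov₂
    exact hnone a ha
  obtain ⟨M, hM⟩ := CoversCodim.exists_separatesOutside (hD ▸ hcov) hDU
  rcases hM.exists_common_or_complementary_pairs hJ hcard hnone hD with
    ⟨p, hp, hpM⟩ | ⟨hcard₄, B, hB, hBJ⟩
  · exact ⟨D, hD, .inl fun A => hM.mem_of_superset hJ (hM.pair_subset hJ hD hp (hnone p) hpM)⟩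
  · exact ⟨B, hB, .inr ⟨hcard₄, hBJ⟩⟩

end IntersectionStructure

/-! ### Consequences of the delta-system method -/

section Centred

variable {α : Type*} [DecidableEq α] {F H : Finset (Finset α)} {s : ℕ} {p E : Finset α}

/-- `E` is centred at `p`: every proper subset of `E` that contains `p` is a kernel. -/
def IsCentredAt (F : Finset (Finset α)) (s : ℕ) (p E : Finset α) : Prop :=
  p ⊆ E ∧ ∀ A, p ⊆ A → A ⊂ E → IsKernel F s A

/-- `E` is the disjoint union of two kernels of size two. For `4`-sets this is the alternative to
being centred at a pair in families without linear paths of length two. -/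
def IsUnionOfKernelPairs (F : Finset (Finset α)) (s : ℕ) (E : Finset α) : Prop :=
  ∃ p ⊆ E, #p = 2 ∧ #(E \ p) = 2 ∧ IsKernel F s p ∧ IsKernel F s (E \ p)

theorem IsCentredAt.mono (h : IsCentredAt H s p E) (hHF : H ⊆ F) : IsCentredAt F s p E :=
  ⟨h.1, fun A hpA hAE => (h.2 A hpA hAE).mono hHF le_rfl⟩

variable {ι : Type*} [Fintype ι] [DecidableEq ι] {χ : α → ι} {J : Finset (Finset ι)} {D : Finset ι}

theorem IsHomogeneous.isCentredAt (h : IsHomogeneous s χ H J) (hE : E ∈ H)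
    (hD : ∀ A, D ⊆ A → A ≠ univ → A ∈ J) : IsCentredAt H s (colorPart χ D E) E := by
  refine ⟨colorPart_subset, fun A hDA hAE => h.isKernel_of_image_mem hE hAE.1 (hD _ ?_ ?_)⟩
  · rw [← image_colorPart (T := D) (h.bijOn E hE).surjOn]
    exact image_subset_image hDA
  · intro hA
    have hcard := card_lt_card hAE
    rw [h.card_eq hE, ← card_univ, ← hA] at hcard
    exact hcard.not_ge card_image_le

theorem IsHomogeneous.isUnionOfKernelPairs (h : IsHomogeneous s χ H J) (hE : E ∈ H)
    (hD : #D = 2) (hDc : #Dᶜ = 2) (hDJ : D ∈ J) (hDcJ : Dᶜ ∈ J) : IsUnionOfKernelPairs H s E := by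
  have hsdiff : E \ colorPart χ D E = colorPart χ Dᶜ E := by
    ext z
    simp only [colorPart, mem_sdiff, mem_filter, mem_compl]
    tauto
  refine ⟨colorPart χ D E, colorPart_subset, ?_, ?_, h.isKernel D hDJ E hE, ?_⟩
  · rw [card_colorPart (h.bijOn E hE), hD]
  · rw [hsdiff, card_colorPart (h.bijOn E hE), hDc]
  · exact hsdiff ▸ h.isKernel Dᶜ hDcJ E hE

theorem IsHomogeneous.card_le_card_shadow_iterate (h : IsHomogeneous s χ H J)
    (hD : ∀ U ∈ J, ¬ Dᶜ ⊆ U) : #H ≤ #(∂^[#D] H) := by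
  refine card_le_card_of_injOn (colorPart χ Dᶜ) (fun E hE => ?_) (h.injOn_colorPart hD)
  have hunion : colorPart χ Dᶜ E ∪ colorPart χ D E = E := by
    ext z
    simp only [colorPart, mem_union, mem_filter, mem_compl]
    tauto
  have hdisj : Disjoint (colorPart χ Dᶜ E) (colorPart χ D E) :=
    disjoint_filter.2 fun z _ hz => mem_compl.1 hz
  exact mem_shadow_iterate_iff_exists_card.2
    ⟨_, card_colorPart (h.bijOn E hE), hdisj, hunion.symm ▸ hE⟩

end Centred

theorem exists_card_le_or_isHomogeneous_coversCodim {k : ℕ} (hk : 0 < k) (s d : ℕ) :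
    ∃ C : ℕ, ∀ (α : Type u) [DecidableEq α] (F : Finset (Finset α)), (∀ E ∈ F, #E = k) →
      #F ≤ C * #(∂^[d] F) ∨
        ∃ (χ : α → Fin k) (H : Finset (Finset α)) (J : Finset (Finset (Fin k))),
          H ⊆ F ∧ H.Nonempty ∧ IsHomogeneous s χ H J ∧ CoversCodim J d := by
  have : NeZero k := ⟨hk.ne'⟩
  obtain ⟨C, hC⟩ := exists_isHomogeneous.{u} (Fin k) s
  refine ⟨C, fun α _ F hF => ?_⟩
  obtain ⟨χ, H, J, hHF, hcard, hH⟩ := hC α F (by simpa using hF)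
  rcases H.eq_empty_or_nonempty with rfl | hne
  · exact .inl (by simp_all)
  by_cases hcov : CoversCodim J d
  · exact .inr ⟨χ, H, J, hHF, hne, hH, hcov⟩
  obtain ⟨D, rfl, hD⟩ : ∃ D : Finset (Fin k), #D = d ∧ ∀ U ∈ J, ¬ Dᶜ ⊆ U := by
    simpa [CoversCodim] using hcov
  refine .inl (hcard.trans (Nat.mul_le_mul_left _ ?_))
  exact (hH.card_le_card_shadow_iterate hD).trans
    (card_le_card (Finset.shadow_monotone.iterate _ hHF))

theorem card_shadow_iterate_le_pow {α : Type*} [DecidableEq α] {F : Finset (Finset α)}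
    {V : Finset α} {k : ℕ} (hF : F ⊆ V.powersetCard k) (d : ℕ) : #(∂^[d] F) ≤ #V ^ (k - d) := by
  refine (card_le_card fun A hA => ?_).trans
    ((card_powersetCard (k - d) V).trans_le (Nat.choose_le_pow _ _))
  obtain ⟨B, hBd, hdisj, hAB⟩ := mem_shadow_iterate_iff_exists_card.1 hA
  obtain ⟨hABV, hABk⟩ := mem_powersetCard.1 (hF hAB)
  rw [card_union_of_disjoint hdisj] at hABk
  exact mem_powersetCard.2 ⟨subset_union_left.trans hABV, by omega⟩

theorem exists_card_le_mul_card_shadow {k : ℕ} (hk : 2 ≤ k) (l : ℕ) :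
    ∃ C : ℕ, ∀ (α : Type u) [DecidableEq α] (F : Finset (Finset α)), (∀ E ∈ F, #E = k) →
      ¬ HasLinearPath F l → #F ≤ C * #(∂ F) := by
  obtain ⟨C, hC⟩ := exists_card_le_or_isHomogeneous_coversCodim.{u} (k := k) (by omega)
    (2 * k + l * k + 1) 1
  refine ⟨C, fun α _ F hF hpath => (hC α F hF).resolve_right ?_⟩
  rintro ⟨χ, H, J, hHF, hne, hH, hcov⟩
  have : Nontrivial (Fin k) := Fin.nontrivial_iff_two_le.2 hk
  obtain ⟨a, b, hab⟩ := exists_pair_ne (Fin k)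
  have hinf := hH.infClosed hne (by rw [Fintype.card_fin]; omega)
  have hmem : ∀ c, {c} ∈ J := fun c =>
    hcov.mem_of_ne_univ hinf hH.univ_notMem (singleton_ne_univ c)
  exact hpath ((hH.hasLinearPath_of_two_singletons hne hab (hmem a) (hmem b)
    (by rw [Fintype.card_fin]; omega)).mono hHF)

theorem exists_card_le_of_not_hasLinearPath_two {k : ℕ} (hk : 4 ≤ k) :
    ∃ C : ℕ, ∀ (α : Type u) [DecidableEq α] (V : Finset α) (F : Finset (Finset α)),
      F ⊆ V.powersetCard k → ¬ HasLinearPath F 2 → #F ≤ C * #V ^ (k - 2) := by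
  obtain ⟨C, hC⟩ := exists_card_le_or_isHomogeneous_coversCodim.{u} (k := k) (by omega) (2 * k) 2
  refine ⟨C, fun α _ V F hF hpath => ?_⟩
  refine ((hC α F fun E hE => (mem_powersetCard.1 (hF hE)).2).resolve_right ?_).trans
    (Nat.mul_le_mul_left _ (card_shadow_iterate_le_pow hF 2))
  rintro ⟨χ, H, J, hHF, hne, hH, hcov⟩
  obtain ⟨a, ha⟩ := exists_singleton_mem_of_coversCodim_two (hH.infClosed hne (by simp))
    hH.univ_notMem (by simpa using hk) hcov
  have htwo := hH.hasLinearPath_two_of_singleton hne ha (by rw [Fintype.card_fin]; omega)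
  exact hpath (htwo.mono hHF)

open Classical in
theorem exists_card_not_centredAt_vertex_le {k s : ℕ} (hk : 4 ≤ k) (l : ℕ) (hs : 2 * k ≤ s)
    (hls : l * k + 1 ≤ s) :
    ∃ C : ℕ, ∀ (α : Type u) [DecidableEq α] (V : Finset α) (F : Finset (Finset α)),
      F ⊆ V.powersetCard k → ¬ HasLinearPath F l →
      #{E ∈ F | ¬ ∃ v, IsCentredAt F s {v} E} ≤ C * #V ^ (k - 2) := by
  obtain ⟨C, hC⟩ := exists_card_le_or_isHomogeneous_coversCodim.{u} (k := k) (by omega) s 2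
  refine ⟨C, fun α _ V F hF hpath => ?_⟩
  have hbad := filter_subset (fun E => ¬ ∃ v, IsCentredAt F s {v} E) F
  refine ((hC α _ fun E hE => (mem_powersetCard.1 (hF (hbad hE))).2).resolve_right ?_).trans
    (Nat.mul_le_mul_left _ (card_shadow_iterate_le_pow (hbad.trans hF) 2))
  rintro ⟨χ, H, J, hH_bad, hne, hH, hcov⟩
  have hHF := hH_bad.trans hbad
  have hone : {a | {a} ∈ J}.Subsingleton := fun a ha b hb => by
    by_contra hab
    exact hpath ((hH.hasLinearPath_of_two_singletons hne hab ha hb (by simpa using hls)).mono hHF)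
  obtain ⟨c, hc⟩ := exists_forall_mem_of_mem_of_coversCodim_two
    (hH.infClosed hne (by simpa using hs)) hH.univ_notMem (by simpa using hk) hcov hone
  obtain ⟨E, hE⟩ := hne
  obtain ⟨v, hv⟩ := card_eq_one.1
    ((card_colorPart (T := {c}) (hH.bijOn E hE)).trans (card_singleton c))
  refine (mem_filter.1 (hH_bad hE)).2 ⟨v, hv ▸ (hH.isCentredAt hE fun A hA => ?_).mono hHF⟩
  exact hc A (singleton_subset_iff.1 hA)

open Classical in
theorem exists_card_not_centredAt_pair_le {k s : ℕ} (hk : 4 ≤ k) (hs : 2 * k ≤ s) :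
    ∃ C : ℕ, ∀ (α : Type u) [DecidableEq α] (V : Finset α) (F : Finset (Finset α)),
      F ⊆ V.powersetCard k → ¬ HasLinearPath F 2 →
      #{E ∈ F | ¬ ((∃ p, #p = 2 ∧ IsCentredAt F s p E) ∨ IsUnionOfKernelPairs F s E)} ≤
        C * #V ^ (k - 3) := by
  obtain ⟨C, hC⟩ := exists_card_le_or_isHomogeneous_coversCodim.{u} (k := k) (by omega) s 3
  refine ⟨C, fun α _ V F hF hpath => ?_⟩
  set bad := {E ∈ F | ¬ ((∃ p, #p = 2 ∧ IsCentredAt F s p E) ∨ IsUnionOfKernelPairs F s E)}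
  have hbad : bad ⊆ F := filter_subset _ _
  refine ((hC α bad fun E hE => (mem_powersetCard.1 (hF (hbad hE))).2).resolve_right ?_).trans
    (Nat.mul_le_mul_left _ (card_shadow_iterate_le_pow (hbad.trans hF) 3))
  rintro ⟨χ, H, J, hH_bad, hne, hH, hcov⟩
  have hHF := hH_bad.trans hbad
  have hnone : ∀ a, {a} ∉ J := fun a ha => hpath <|
    (hH.hasLinearPath_two_of_singleton hne ha (by rw [Fintype.card_fin]; omega)).mono hHF
  obtain ⟨D, hD, hDJ⟩ := exists_pair_forall_superset_mem
    (hH.infClosed hne (by simpa using hs)) hH.univ_notMem (by simpa using hk) hcov hnone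
  obtain ⟨E, hE⟩ := hne
  refine (mem_filter.1 (hH_bad hE)).2 ?_
  rcases hDJ with hDJ | ⟨hk4, hDJ, hDcJ⟩
  · refine .inl ⟨colorPart χ D E, ?_, (hH.isCentredAt hE hDJ).mono hHF⟩
    rw [card_colorPart (hH.bijOn E hE), hD]
  · have hDc : #Dᶜ = 2 := by rw [card_compl, hk4, hD]
    obtain ⟨p, hpE, hp, hEp, hpker, hEpker⟩ := hH.isUnionOfKernelPairs hE hD hDc hDJ hDcJ
    exact .inr ⟨p, hpE, hp, hEp, hpker.mono hHF le_rfl, hEpker.mono hHF le_rfl⟩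

/-! ### Estimates for binomial coefficients -/

section BinomialEstimates

open Nat (factorial)

theorem pow_succ_le_sub_pow_add (n b r : ℕ) :
    n ^ (r + 1) ≤ (n - b) ^ (r + 1) + (r + 1) * b * n ^ r := by
  induction r with
  | zero => simp only [zero_add, pow_one, pow_zero]; omega
  | succ r ih =>
    calc n ^ (r + 2) = n * n ^ (r + 1) := by ring
      _ ≤ n * ((n - b) ^ (r + 1) + (r + 1) * b * n ^ r) := by gcongr
      _ = n * (n - b) ^ (r + 1) + (r + 1) * b * n ^ (r + 1) := by ring
      _ ≤ ((n - b) + b) * (n - b) ^ (r + 1) + (r + 1) * b * n ^ (r + 1) := by gcongr; omega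
      _ = (n - b) ^ (r + 2) + b * (n - b) ^ (r + 1) + (r + 1) * b * n ^ (r + 1) := by ring
      _ ≤ (n - b) ^ (r + 2) + b * n ^ (r + 1) + (r + 1) * b * n ^ (r + 1) := by
        gcongr; exact Nat.sub_le _ _
      _ = (n - b) ^ (r + 2) + (r + 1 + 1) * b * n ^ (r + 1) := by ring

theorem sub_pow_le_factorial_mul_choose (n r : ℕ) :
    (n + 1 - r) ^ r ≤ factorial r * n.choose r := by
  rw [← Nat.descFactorial_eq_factorial_mul_choose]
  exact Nat.pow_sub_le_descFactorial n r

theorem factorial_mul_choose_le_pow (n r : ℕ) : factorial r * n.choose r ≤ n ^ r := by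
  rw [← Nat.descFactorial_eq_factorial_mul_choose]
  exact Nat.descFactorial_le_pow n r

theorem pow_le_factorial_mul_choose_sub_add (n a r : ℕ) :
    n ^ (r + 1) ≤
      factorial (r + 1) * (n - a).choose (r + 1) + (r + 1) * (r + 1 + a) * n ^ r :=
  calc n ^ (r + 1)
      ≤ (n - (r + 1 + a)) ^ (r + 1) + (r + 1) * (r + 1 + a) * n ^ r :=
        pow_succ_le_sub_pow_add _ _ _
    _ ≤ (n - a + 1 - (r + 1)) ^ (r + 1) + (r + 1) * (r + 1 + a) * n ^ r := by
        gcongr ?_ ^ _ + _; omega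
    _ ≤ _ := by gcongr; exact sub_pow_le_factorial_mul_choose _ _

theorem choose_succ_add_mul_choose_le (n m r : ℕ) :
    n.choose (r + 1) + m * n.choose r ≤ (n + m).choose (r + 1) := by
  induction m with
  | zero => simp only [zero_mul, add_zero, le_refl]
  | succ m ih =>
    have hmono : n.choose r ≤ (n + m).choose r := Nat.choose_le_choose r (Nat.le_add_right n m)
    rw [← add_assoc, Nat.choose_succ_succ', add_mul]
    omega

theorem exists_choose_sub_add_le_choose (r C a : ℕ) :
    ∃ q n₀ : ℕ, 2 ≤ q ∧ ∀ n ≥ n₀, ∀ m X : ℕ, q * m ≤ n → q * X ≤ C * m * n ^ (r + 1) →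
      (n - a - m).choose (r + 2) + C * m * n ^ r + X ≤ (n - a).choose (r + 2) := by
  set K := 4 ^ (r + 1) * factorial (r + 1) with hK
  have hKpos : 0 < K := by positivity
  set q := 2 * K * (C + 1) with hq
  have hq2 : 2 ≤ q := by nlinarith [Nat.zero_le (K * C)]
  refine ⟨q, q + 4 * (r + a + 2), hq2, fun n hn m X hm hX => ?_⟩
  have hmn : 2 * m ≤ n := (Nat.mul_le_mul_right m hq2).trans hm
  obtain ⟨M, hM⟩ : ∃ M, n - a = M + m := ⟨n - a - m, by omega⟩
  have hpow : n ^ (r + 1) ≤ K * M.choose (r + 1) :=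
    calc n ^ (r + 1) ≤ (4 * (M + 1 - (r + 1))) ^ (r + 1) := by gcongr; omega
      _ ≤ 4 ^ (r + 1) * (factorial (r + 1) * M.choose (r + 1)) := by
        rw [mul_pow]; gcongr; exact sub_pow_le_factorial_mul_choose _ _
      _ = K * M.choose (r + 1) := by rw [hK, mul_assoc]
  have hfirst : 2 * K * ((C + 1) * (C * m * n ^ r)) ≤ C * (m * n ^ (r + 1)) :=
    calc 2 * K * ((C + 1) * (C * m * n ^ r)) = q * (C * m * n ^ r) := by rw [hq]; ring
      _ ≤ n * (C * m * n ^ r) := by gcongr; omega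
      _ = C * (m * n ^ (r + 1)) := by ring
  have hsecond : 2 * K * ((C + 1) * X) ≤ C * (m * n ^ (r + 1)) := by
    calc 2 * K * ((C + 1) * X) = q * X := by rw [hq]; ring
      _ ≤ C * (m * n ^ (r + 1)) := by rwa [← mul_assoc]
  have hloss : C * m * n ^ r + X ≤ m * M.choose (r + 1) := by
    have hscaled : 2 * K * (C + 1) * (C * m * n ^ r + X) ≤
        2 * K * (C + 1) * (m * M.choose (r + 1)) := by
      nlinarith [Nat.mul_le_mul_left ((C + 1) * m) hpow, Nat.zero_le (m * n ^ (r + 1))]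
    exact Nat.le_of_mul_le_mul_left hscaled (by omega)
  rw [hM, Nat.add_sub_cancel, add_assoc]
  exact (Nat.add_le_add_left hloss _).trans (choose_succ_add_mul_choose_le M m (r + 1))

theorem mul_factorial_mul_sum_choose_le {ι : Type*} {I : Finset ι} {a : ι → ℕ} {c n q : ℕ}
    (r : ℕ) (ha : ∀ i ∈ I, a i ≤ n) (hq : ∀ i ∈ I, q * a i ≤ c * n) :
    q * (factorial (r + 2) * ∑ i ∈ I, (a i).choose (r + 2)) ≤
      c * n ^ (r + 1) * ∑ i ∈ I, a i := by
  simp only [mul_sum]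
  refine sum_le_sum fun i hi => ?_
  have hai := ha i hi
  calc q * (factorial (r + 2) * (a i).choose (r + 2))
      ≤ q * a i ^ (r + 2) := by gcongr; exact factorial_mul_choose_le_pow _ _
    _ = (q * a i) * a i ^ r * a i := by ring
    _ ≤ (c * n) * n ^ r * a i :=
        Nat.mul_le_mul_right _ (Nat.mul_le_mul (hq i hi) (Nat.pow_le_pow_left hai r))
    _ = c * n ^ (r + 1) * a i := by ring

theorem le_of_mul_choose_le {a D f n q r T : ℕ} (hn : 0 < n)
    (hlower : T * (n - a).choose (r + 1) ≤ f)
    (hupper : q * (factorial (r + 1) * f) + n ^ (r + 1) ≤ q * T * n ^ (r + 1) + D * n ^ r) :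
    n ≤ D + q * T * ((r + 1) * (r + 1 + a)) := by
  have hpow : q * T * n ^ (r + 1) ≤
      q * (factorial (r + 1) * f) + q * T * ((r + 1) * (r + 1 + a)) * n ^ r :=
    calc q * T * n ^ (r + 1)
        ≤ q * T * (factorial (r + 1) * (n - a).choose (r + 1) +
            (r + 1) * (r + 1 + a) * n ^ r) := by
          gcongr; exact pow_le_factorial_mul_choose_sub_add n a r
      _ = q * (factorial (r + 1) * (T * (n - a).choose (r + 1))) +
            q * T * ((r + 1) * (r + 1 + a)) * n ^ r := by ring
      _ ≤ _ := by gcongr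
  refine Nat.le_of_mul_le_mul_right (c := n ^ r) ?_ (by positivity)
  rw [add_mul, ← pow_succ']
  omega

theorem mul_le_sub_one_mul_of_lt_mul_sub {a c n q : ℕ} (h : n < q * (n - a - c)) :
    q * c ≤ (q - 1) * n := by
  rw [Nat.mul_sub, Nat.mul_sub] at h
  rw [Nat.sub_mul, one_mul]
  omega

end BinomialEstimates

/-! ### Kernel neighbourhoods -/

section KernelNbrs

variable {α : Type*} [DecidableEq α]

open Classical in
/-- The vertices `x` of `V` outside `p` for which `p ∪ {x}` is a kernel. -/
noncomputable def kernelNbrs (V : Finset α) (F : Finset (Finset α)) (s : ℕ) (p : Finset α) :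
    Finset α :=
  {x ∈ V \ p | IsKernel F s (insert x p)}

variable {F : Finset (Finset α)} {V p : Finset α} {k s : ℕ} {v x : α}

theorem mem_kernelNbrs : x ∈ kernelNbrs V F s p ↔ (x ∈ V ∧ x ∉ p) ∧ IsKernel F s (insert x p) := by
  simp only [kernelNbrs, mem_filter, mem_sdiff]

theorem mem_kernelNbrs_singleton :
    x ∈ kernelNbrs V F s {v} ↔ x ∈ V ∧ (kernelGraph F s).Adj v x := by
  rw [mem_kernelNbrs, mem_singleton, and_assoc, SimpleGraph.adj_comm]
  rfl

theorem kernelNbrs_subset : kernelNbrs V F s p ⊆ V \ p :=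
  fun _ hx => mem_sdiff.2 (mem_kernelNbrs.1 hx).1

theorem card_kernelNbrs_le : #(kernelNbrs V F s p) ≤ #V :=
  card_le_card (kernelNbrs_subset.trans sdiff_subset)

theorem card_sdiff_kernelNbrs (hp : p ⊆ V) :
    #((V \ p) \ kernelNbrs V F s p) = #V - #p - #(kernelNbrs V F s p) := by
  rw [card_sdiff_of_subset kernelNbrs_subset, card_sdiff_of_subset hp]

theorem card_kernelNbrs (hp : p ⊆ V) :
    #(kernelNbrs V F s p) = #V - #p - #((V \ p) \ kernelNbrs V F s p) := by
  have hle : #(kernelNbrs V F s p) ≤ #(V \ p) := card_le_card kernelNbrs_subset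
  rw [card_sdiff_of_subset hp] at hle
  rw [card_sdiff_kernelNbrs hp, Nat.sub_sub_self hle]

theorem card_filter_superset_le (hF : F ⊆ V.powersetCard k) :
    #{E ∈ F | p ⊆ E} ≤ (#(kernelNbrs V F s p)).choose (k - #p) +
      #((V \ p) \ kernelNbrs V F s p) * (s * #V ^ (k - #p - 2)) := by
  set N := kernelNbrs V F s p
  have hcover : {E ∈ F | p ⊆ E} ⊆ {E ∈ F | p ⊆ E ∧ E \ p ⊆ N} ∪
      ((V \ p) \ N).biUnion fun x => {E ∈ F | insert x p ⊆ E} := by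
    intro E hE
    obtain ⟨hEF, hpE⟩ := mem_filter.1 hE
    by_cases hEN : E \ p ⊆ N
    · exact mem_union_left _ (mem_filter.2 ⟨hEF, hpE, hEN⟩)
    · obtain ⟨x, hx, hxN⟩ := not_subset.1 hEN
      have hEV := (mem_powersetCard.1 (hF hEF)).1
      have hxB : x ∈ (V \ p) \ N := mem_sdiff.2 ⟨sdiff_subset_sdiff hEV subset_rfl hx, hxN⟩
      exact mem_union_right _ (mem_biUnion.2 ⟨x, hxB, mem_filter.2
        ⟨hEF, insert_subset (mem_sdiff.1 hx).1 hpE⟩⟩)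
  have hdeg : ∀ x ∈ (V \ p) \ N, #{E ∈ F | insert x p ⊆ E} ≤ s * #V ^ (k - #p - 2) := by
    intro x hx
    obtain ⟨hxVp, hxN⟩ := mem_sdiff.1 hx
    have hker : ¬ IsKernel F s (insert x p) := fun h =>
      hxN (mem_kernelNbrs.2 ⟨mem_sdiff.1 hxVp, h⟩)
    have := card_filter_subset_le_of_not_isKernel hF hker
    rwa [card_insert_of_notMem (mem_sdiff.1 hxVp).2, Nat.sub_sub, add_assoc,
      ← Nat.sub_sub k (#p)] at this
  refine (card_le_card hcover).trans ((card_union_le _ _).trans (Nat.add_le_add ?_ ?_))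
  · exact card_filter_subset_sdiff_le hF p N
  · exact card_biUnion_le_card_mul _ _ _ hdeg

theorem IsCentredAt.sdiff_subset_kernelNbrs {E : Finset α} (h : IsCentredAt F s p E) (hE : E ⊆ V)
    (hp : #p + 1 < #E) : E \ p ⊆ kernelNbrs V F s p := by
  intro x hx
  obtain ⟨hxE, hxp⟩ := mem_sdiff.1 hx
  refine mem_kernelNbrs.2 ⟨⟨hE hxE, hxp⟩, h.2 _ (subset_insert x p) ?_⟩
  refine (insert_subset hxE h.1).ssubset_of_ne fun heq => ?_
  rw [← heq, card_insert_of_notMem hxp] at hp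
  exact lt_irrefl _ hp

open Classical in
theorem card_filter_isCentredAt_le {ι : Type*} (hF : F ⊆ V.powersetCard k) (I : Finset ι)
    {p : ι → Finset α} (hp : ∀ i ∈ I, #(p i) + 1 < k) :
    #{E ∈ F | ∃ i ∈ I, IsCentredAt F s (p i) E} ≤
      ∑ i ∈ I, (#(kernelNbrs V F s (p i))).choose (k - #(p i)) := by
  have hcover : {E ∈ F | ∃ i ∈ I, IsCentredAt F s (p i) E} ⊆
      I.biUnion fun i => {E ∈ F | p i ⊆ E ∧ E \ p i ⊆ kernelNbrs V F s (p i)} := by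
    intro E hE
    obtain ⟨hEF, i, hi, hcentre⟩ := mem_filter.1 hE
    obtain ⟨hEV, hEk⟩ := mem_powersetCard.1 (hF hEF)
    exact mem_biUnion.2 ⟨i, hi, mem_filter.2 ⟨hEF, hcentre.1,
      hcentre.sdiff_subset_kernelNbrs hEV (hEk ▸ hp i hi)⟩⟩
  exact (card_le_card hcover).trans <| card_biUnion_le.trans <| sum_le_sum fun i _ =>
    card_filter_subset_sdiff_le hF _ _

end KernelNbrs

/-! ### Families without linear paths of length two -/

section PathLengthTwo

variable {α : Type*} [DecidableEq α]

open Classical in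
/-- The two-element subsets of `V` that are kernels of `F`. -/
noncomputable def kernelPairs (V : Finset α) (F : Finset (Finset α)) (s : ℕ) :
    Finset (Finset α) :=
  {p ∈ V.powersetCard 2 | IsKernel F s p}

variable {F : Finset (Finset α)} {V p E : Finset α} {k s : ℕ} {x : α}

theorem mem_kernelPairs : p ∈ kernelPairs V F s ↔ (p ⊆ V ∧ #p = 2) ∧ IsKernel F s p := by
  simp only [kernelPairs, mem_filter, mem_powersetCard]

theorem IsKernel.insert_of_mem_union_kernelNbrs (h : IsKernel F s p)
    (hx : x ∈ p ∪ kernelNbrs V F s p) : IsKernel F s (insert x p) := by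
  rcases mem_union.1 hx with hxp | hxN
  · rwa [insert_eq_self.2 hxp]
  · exact (mem_kernelNbrs.1 hxN).2

theorem disjoint_of_mem_kernelPairs (hF : ∀ E ∈ F, #E ≤ s) (hpath : ¬ HasLinearPath F 2)
    {p p' : Finset α} (hp : p ∈ kernelPairs V F s) (hp' : p' ∈ kernelPairs V F s) (hne : p ≠ p') :
    Disjoint p p' := by
  obtain ⟨⟨-, hp2⟩, hker⟩ := mem_kernelPairs.1 hp
  obtain ⟨⟨-, hp'2⟩, hker'⟩ := mem_kernelPairs.1 hp'
  have hone : #(p ∩ p') ≠ 1 := fun h => hpath (hker.hasLinearPath_two hker' hF h)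
  have hlt : #(p ∩ p') < 2 := by
    by_contra! hge
    have hpp' : p ⊆ p' := inter_eq_left.1 (eq_of_subset_of_card_le inter_subset_left (by omega))
    exact hne (eq_of_subset_of_card_le hpp' (by omega))
  exact disjoint_iff_inter_eq_empty.2 (card_eq_zero.1 (by omega))

theorem pairwiseDisjoint_union_kernelNbrs (hF : ∀ E ∈ F, #E ≤ s) (hpath : ¬ HasLinearPath F 2) :
    (kernelPairs V F s : Set (Finset α)).PairwiseDisjoint fun p => p ∪ kernelNbrs V F s p := by
  intro p hp p' hp' hne
  have hdisj := disjoint_of_mem_kernelPairs hF hpath hp hp' hne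
  refine disjoint_left.2 fun x hx hx' => hpath ?_
  have hker := (mem_kernelPairs.1 hp).2.insert_of_mem_union_kernelNbrs hx
  have hker' := (mem_kernelPairs.1 hp').2.insert_of_mem_union_kernelNbrs hx'
  refine hker.hasLinearPath_two hker' hF ?_
  rw [← insert_inter_distrib, disjoint_iff_inter_eq_empty.1 hdisj, insert_empty_eq, card_singleton]

theorem sum_card_kernelNbrs_add_two_mul_le (hF : ∀ E ∈ F, #E ≤ s) (hpath : ¬ HasLinearPath F 2) :
    ∑ p ∈ kernelPairs V F s, #(kernelNbrs V F s p) + 2 * #(kernelPairs V F s) ≤ #V := by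
  have hcard : ∀ p ∈ kernelPairs V F s,
      #(p ∪ kernelNbrs V F s p) = #(kernelNbrs V F s p) + 2 := by
    intro p hp
    rw [card_union_of_disjoint (disjoint_sdiff.mono_right kernelNbrs_subset),
      (mem_kernelPairs.1 hp).1.2, add_comm]
  calc ∑ p ∈ kernelPairs V F s, #(kernelNbrs V F s p) + 2 * #(kernelPairs V F s)
      = ∑ p ∈ kernelPairs V F s, #(p ∪ kernelNbrs V F s p) := by
        rw [sum_congr rfl hcard, sum_add_distrib, sum_const, smul_eq_mul, mul_comm 2]
    _ = #((kernelPairs V F s).biUnion fun p => p ∪ kernelNbrs V F s p) :=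
        (card_biUnion (pairwiseDisjoint_union_kernelNbrs hF hpath)).symm
    _ ≤ #V := card_le_card <| biUnion_subset.2 fun p hp =>
        union_subset (mem_kernelPairs.1 hp).1.1 (kernelNbrs_subset.trans sdiff_subset)

open Classical in
theorem card_filter_isUnionOfKernelPairs_le (hF : F ⊆ V.powersetCard k) :
    #{E ∈ F | IsUnionOfKernelPairs F s E} ≤ #(kernelPairs V F s) ^ 2 := by
  have hcover : {E ∈ F | IsUnionOfKernelPairs F s E} ⊆
      (kernelPairs V F s ×ˢ kernelPairs V F s).image fun z => z.1 ∪ z.2 := by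
    intro E hE
    obtain ⟨hEF, p, hpE, hp2, hEp2, hp, hEp⟩ := mem_filter.1 hE
    have hEV := (mem_powersetCard.1 (hF hEF)).1
    exact mem_image.2 ⟨(p, E \ p), mem_product.2 ⟨mem_kernelPairs.2 ⟨⟨hpE.trans hEV, hp2⟩, hp⟩,
      mem_kernelPairs.2 ⟨⟨sdiff_subset.trans hEV, hEp2⟩, hEp⟩⟩, union_sdiff_of_subset hpE⟩
  refine (card_le_card hcover).trans (card_image_le.trans ?_)
  rw [card_product, sq]

open Classical in
theorem factorial_mul_card_filter_isUnionOfKernelPairs_le (hF : F ⊆ V.powersetCard k)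
    (hpairs : 2 * #(kernelPairs V F s) ≤ #V) :
    (k - 2).factorial * #{E ∈ F | IsUnionOfKernelPairs F s E} ≤
      #V ^ (k - 3) * #(kernelPairs V F s) := by
  rcases {E ∈ F | IsUnionOfKernelPairs F s E}.eq_empty_or_nonempty with hempty | ⟨E, hE⟩
  · rw [hempty, card_empty, mul_zero]; exact Nat.zero_le _
  obtain ⟨hEF, p, hpE, hp2, hEp2, -⟩ := mem_filter.1 hE
  obtain rfl : k = 4 := by
    rw [← (mem_powersetCard.1 (hF hEF)).2, ← card_sdiff_add_card_eq_card hpE, hp2, hEp2]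
  calc 2 * #{E ∈ F | IsUnionOfKernelPairs F s E} ≤ 2 * #(kernelPairs V F s) ^ 2 := by
        gcongr; exact card_filter_isUnionOfKernelPairs_le hF
    _ = 2 * #(kernelPairs V F s) * #(kernelPairs V F s) := by ring
    _ ≤ #V ^ 1 * #(kernelPairs V F s) := by rw [pow_one]; gcongr

open Classical in
theorem card_le_card_not_centredAt_pair_add (hF : F ⊆ V.powersetCard k) (hk : 4 ≤ k) :
    #F ≤ #{E ∈ F | ¬ ((∃ p, #p = 2 ∧ IsCentredAt F s p E) ∨ IsUnionOfKernelPairs F s E)} +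
      (∑ p ∈ kernelPairs V F s, (#(kernelNbrs V F s p)).choose (k - 2) +
        #{E ∈ F | IsUnionOfKernelPairs F s E}) := by
  have hcentred : {E ∈ F | ∃ p, #p = 2 ∧ IsCentredAt F s p E} ⊆
      {E ∈ F | ∃ p ∈ kernelPairs V F s, IsCentredAt F s p E} := by
    intro E hE
    obtain ⟨hEF, p, hp2, hp⟩ := mem_filter.1 hE
    obtain ⟨hEV, hEk⟩ := mem_powersetCard.1 (hF hEF)
    have hssub : p ⊂ E := hp.1.ssubset_of_ne (by rintro rfl; omega)
    exact mem_filter.2 ⟨hEF, p, mem_kernelPairs.2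
      ⟨⟨hp.1.trans hEV, hp2⟩, hp.2 p subset_rfl hssub⟩, hp⟩
  have hsum : #{E ∈ F | ∃ p, #p = 2 ∧ IsCentredAt F s p E} ≤
      ∑ p ∈ kernelPairs V F s, (#(kernelNbrs V F s p)).choose (k - 2) := by
    have hcard : ∀ p ∈ kernelPairs V F s, #p = 2 := fun p hp => (mem_kernelPairs.1 hp).1.2
    refine (card_le_card hcentred).trans ((card_filter_isCentredAt_le hF _ fun p hp => ?_).trans ?_)
    · rw [hcard p hp]; omega
    · exact (sum_congr rfl fun p hp => by rw [hcard p hp]).le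
  have hcover : F ⊆
      {E ∈ F | ¬ ((∃ p, #p = 2 ∧ IsCentredAt F s p E) ∨ IsUnionOfKernelPairs F s E)} ∪
        ({E ∈ F | ∃ p, #p = 2 ∧ IsCentredAt F s p E} ∪ {E ∈ F | IsUnionOfKernelPairs F s E}) := by
    intro E hE
    simp only [mem_union, mem_filter, hE, true_and]
    exact (Classical.em _).symm
  refine (card_le_card hcover).trans ((card_union_le _ _).trans (Nat.add_le_add_left ?_ _))
  exact (card_union_le _ _).trans (Nat.add_le_add_right hsum _)

theorem subset_of_mem_kernelPairs (hpath : ¬ HasLinearPath F 2) (hp : p ∈ kernelPairs V F s)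
    (hE : E ∈ F) (hEs : #E ≤ s) (hmeet : ¬ Disjoint p E) : p ⊆ E := by
  obtain ⟨⟨-, hp2⟩, hker⟩ := mem_kernelPairs.1 hp
  have hone : #(p ∩ E) ≠ 1 := fun h => hpath (hker.hasLinearPath_two_of_edge hE hEs h)
  have hpos : #(p ∩ E) ≠ 0 := fun h =>
    hmeet (disjoint_iff_inter_eq_empty.2 (card_eq_zero.1 h))
  exact inter_eq_left.1 (eq_of_subset_of_card_le inter_subset_left (by omega))

theorem subset_sdiff_kernelNbrs (hpath : ¬ HasLinearPath F 2) (hp : p ∈ kernelPairs V F s)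
    (hE : E ∈ F) (hEs : #E ≤ s) (hEV : E ⊆ V) (hpE : ¬ p ⊆ E) :
    E ⊆ (V \ p) \ kernelNbrs V F s p := by
  have hdisj : Disjoint p E := by
    by_contra hmeet
    exact hpE (subset_of_mem_kernelPairs hpath hp hE hEs hmeet)
  refine fun x hx => mem_sdiff.2 ⟨mem_sdiff.2 ⟨hEV hx, disjoint_right.1 hdisj hx⟩, fun hxN => ?_⟩
  refine hpath ((mem_kernelNbrs.1 hxN).2.hasLinearPath_two_of_edge hE hEs ?_)
  rw [insert_inter_of_mem hx, disjoint_iff_inter_eq_empty.1 hdisj, insert_empty_eq, card_singleton]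

end PathLengthTwo

theorem exists_kernelPair_of_choose_le {k s q : ℕ} (hk : 4 ≤ k) (hs : 2 * k ≤ s) (hq : 2 ≤ q) :
    ∃ n₀ : ℕ, ∀ (α : Type u) [DecidableEq α] (V : Finset α) (F : Finset (Finset α)),
      F ⊆ V.powersetCard k → ¬ HasLinearPath F 2 → n₀ ≤ #V → (#V - 2).choose (k - 2) ≤ #F →
      ∃ p ∈ kernelPairs V F s, q * #((V \ p) \ kernelNbrs V F s p) ≤ #V := by
  classical
  obtain ⟨C, hC⟩ := exists_card_not_centredAt_pair_le.{u} hk hs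
  obtain ⟨r, rfl⟩ : ∃ r, k = r + 4 := ⟨k - 4, by omega⟩
  refine ⟨q * (r + 2).factorial * C + q * 1 * ((r + 2) * (r + 2 + 2)) + 1,
    fun α _ V F hF hpath hn hchoose => ?_⟩
  by_contra! hsmall
  have hcardE : ∀ E ∈ F, #E ≤ s := fun E hE => by
    have := (mem_powersetCard.1 (hF hE)).2
    omega
  have hsum := sum_card_kernelNbrs_add_two_mul_le (V := V) hcardE hpath
  have hcentred := mul_factorial_mul_sum_choose_le (I := kernelPairs V F s) (c := q - 1) r
    (fun p _ => card_kernelNbrs_le (V := V)) fun p hp => by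
      have hlt := hsmall p hp
      rw [card_sdiff_kernelNbrs (mem_kernelPairs.1 hp).1.1] at hlt
      exact mul_le_sub_one_mul_of_lt_mul_sub hlt
  have hunions := Nat.mul_le_mul (show q ≤ 2 * (q - 1) by omega)
    (factorial_mul_card_filter_isUnionOfKernelPairs_le (s := s) hF (by omega))
  have hcover := (card_le_card_not_centredAt_pair_add (s := s) hF hk).trans
    (Nat.add_le_add_right (hC α V F hF hpath) _)
  simp only [show r + 4 - 2 = r + 2 by omega, show r + 4 - 3 = r + 1 by omega]
    at hunions hcover hchoose
  have hupper : q * ((r + 2).factorial * #F) + #V ^ (r + 2) ≤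
      q * 1 * #V ^ (r + 2) + q * (r + 2).factorial * C * #V ^ (r + 1) := by
    generalize (r + 2).factorial = R at *
    generalize #V = n at *
    generalize ∑ p ∈ kernelPairs V F s, (#(kernelNbrs V F s p)).choose (r + 2) = A at *
    generalize ∑ p ∈ kernelPairs V F s, #(kernelNbrs V F s p) = S at *
    generalize #(kernelPairs V F s) = Q at *
    calc q * (R * #F) + n ^ (r + 2)
        ≤ q * (R * (C * n ^ (r + 1) + (A + #{E ∈ F | IsUnionOfKernelPairs F s E}))) +
            n ^ (r + 2) := by gcongr
      _ ≤ q * R * C * n ^ (r + 1) + (q - 1) * n ^ (r + 1) * (S + 2 * Q) + n ^ (r + 2) := by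
          linarith
      _ ≤ q * R * C * n ^ (r + 1) + (q - 1) * n ^ (r + 1) * n + n ^ (r + 2) := by gcongr
      _ = ((q - 1) + 1) * n ^ (r + 2) + q * R * C * n ^ (r + 1) := by ring
      _ = _ := by rw [Nat.sub_add_cancel (by omega), mul_one]
  exact (Nat.lt_of_succ_le hn).not_ge (le_of_mul_choose_le (by omega) (by rwa [one_mul]) hupper)

theorem exists_card_le_choose_of_not_hasLinearPath_two {k : ℕ} (hk : 4 ≤ k) :
    ∃ n₀ : ℕ, ∀ (α : Type u) [DecidableEq α] (V : Finset α) (F : Finset (Finset α)),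
      F ⊆ V.powersetCard k → ¬ HasLinearPath F 2 → n₀ ≤ #V → #F ≤ (#V - 2).choose (k - 2) := by
  obtain ⟨C, hC⟩ := exists_card_le_of_not_hasLinearPath_two.{u} hk
  obtain ⟨r, rfl⟩ : ∃ r, k = r + 4 := ⟨k - 4, by omega⟩
  set s := 2 * (r + 4) with hs
  obtain ⟨q, n₁, hq, hclean⟩ := exists_choose_sub_add_le_choose r (s + C) 2
  obtain ⟨n₂, hstab⟩ := exists_kernelPair_of_choose_le.{u} hk hs.ge hq
  refine ⟨n₁ + n₂, fun α _ V F hF hpath hn => ?_⟩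
  by_contra! hlarge
  obtain ⟨p, hp, hpq⟩ := hstab α V F hF hpath (by omega) hlarge.le
  obtain ⟨⟨hpV, hp2⟩, -⟩ := mem_kernelPairs.1 hp
  set B := (V \ p) \ kernelNbrs V F s p with hB
  have hoff : #{E ∈ F | ¬ p ⊆ E} ≤ C * #B ^ (r + 2) := by
    refine hC α B _ (fun E hE => ?_) fun h => hpath (h.mono (filter_subset _ _))
    obtain ⟨hEF, hpE⟩ := mem_filter.1 hE
    obtain ⟨hEV, hEk⟩ := mem_powersetCard.1 (hF hEF)
    exact mem_powersetCard.2 ⟨subset_sdiff_kernelNbrs hpath hp hEF (by omega) hEV hpE, hEk⟩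
  have hon := card_filter_superset_le (s := s) (p := p) hF
  rw [card_kernelNbrs hpV, ← hB, hp2] at hon
  have hoff_small : q * (C * #B ^ (r + 2)) ≤ (s + C) * #B * #V ^ (r + 1) :=
    calc q * (C * #B ^ (r + 2)) = C * #B * ((q * #B) * #B ^ r) := by ring
      _ ≤ (s + C) * #B * (#V * #V ^ r) := by
        gcongr
        · omega
        · exact sdiff_subset.trans sdiff_subset
      _ = (s + C) * #B * #V ^ (r + 1) := by ring
  have hon_small : #B * (s * #V ^ r) ≤ (s + C) * #B * #V ^ r := by
    nlinarith [Nat.zero_le (C * #B * #V ^ r)]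
  have hsum := hclean (#V) (by omega) (#B) _ hpq hoff_small
  have hsplit := card_filter_add_card_filter_not (s := F) (p ⊆ ·)
  simp only [show r + 4 - 2 = r + 2 by omega, Nat.add_sub_cancel] at hon hlarge
  omega

/-! ### Graphs without long paths -/

section Graph

variable {α : Type*} {G : SimpleGraph α} {l t : ℕ}

open Classical in
theorem exists_isPath_of_forall_le_card_adj {U : Finset α} (hU : U.Nonempty)
    (hdeg : ∀ x ∈ U, l ≤ #{y ∈ U | G.Adj x y}) :
    ∀ j ≤ l, ∃ x ∈ U, ∃ y, ∃ p : G.Walk x y, p.IsPath ∧ p.length = j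
  | 0, _ => let ⟨x, hx⟩ := hU; ⟨x, hx, x, .nil, .nil, rfl⟩
  | j + 1, hj => by
    obtain ⟨x, hx, y, p, hp, hlen⟩ := exists_isPath_of_forall_le_card_adj hU hdeg j (by omega)
    have hcard : #p.support.tail.toFinset < #{z ∈ U | G.Adj x z} := by
      have htail : p.support.tail.length = j := by
        rw [List.length_tail, p.length_support, hlen, Nat.add_sub_cancel]
      exact (List.toFinset_card_le _).trans_lt (by have := hdeg x hx; omega)
    obtain ⟨z, hz, hzp⟩ := exists_mem_notMem_of_card_lt_card hcard
    obtain ⟨hzU, hxz⟩ := mem_filter.1 hz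
    have hzsupp : z ∉ p.support := by
      rw [← p.cons_tail_support, List.mem_cons, not_or]
      exact ⟨hxz.ne', fun h => hzp (List.mem_toFinset.2 h)⟩
    exact ⟨z, hzU, y, .cons hxz.symm p, hp.cons hzsupp, by rw [SimpleGraph.Walk.length_cons, hlen]⟩

open Classical in
theorem sum_card_adj_le_of_degenerate (d : ℕ) (V : Finset α)
    (hV : ∀ U ⊆ V, U.Nonempty → ∃ x ∈ U, #{y ∈ U | G.Adj x y} ≤ d) :
    ∑ v ∈ V, #{x ∈ V | G.Adj v x} ≤ 2 * d * #V := by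
  induction V using Finset.eraseInduction with | _ V ih
  rcases V.eq_empty_or_nonempty with rfl | hne
  · simp only [sum_empty, Nat.zero_le]
  obtain ⟨x, hx, hxd⟩ := hV V subset_rfl hne
  have hrest := ih x hx fun U hU => hV U (hU.trans (erase_subset _ _))
  have hsplit : ∀ v ∈ V.erase x, #{y ∈ V | G.Adj v y} =
      #{y ∈ V.erase x | G.Adj v y} + if G.Adj x v then 1 else 0 := by
    intro v _
    rw [← insert_erase hx, filter_insert, insert_erase hx, G.adj_comm x v]
    split_ifs
    · exact card_insert_of_notMem fun h => notMem_erase x V (mem_filter.1 h).1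
    · rfl
  have hx_sum : ∑ v ∈ V.erase x, (if G.Adj x v then 1 else 0) ≤ d := by
    rw [← card_filter]
    exact (card_le_card (filter_subset_filter _ (erase_subset _ _))).trans hxd
  rw [← add_sum_erase _ _ hx, sum_congr rfl hsplit, sum_add_distrib, ← card_erase_add_one hx,
    mul_add]
  omega

open Classical in
theorem sum_card_adj_le (hG : ∀ ⦃x y⦄ (p : G.Walk x y), p.IsPath → p.length ≠ l)
    (V : Finset α) : ∑ v ∈ V, #{x ∈ V | G.Adj v x} ≤ 2 * l * #V := by
  refine sum_card_adj_le_of_degenerate l V fun U _ hU => ?_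
  by_contra! hdeg
  obtain ⟨x, -, y, p, hp, hlen⟩ :=
    exists_isPath_of_forall_le_card_adj hU (fun x hx => (hdeg x hx).le) l le_rfl
  exact hG p hp hlen

theorem exists_isPath_of_forall_adj [DecidableEq α] (T : Finset α) : ∀ {M : Finset α},
    #T < #M → (∀ v ∈ T, ∀ x ∈ M, G.Adj v x) →
      ∃ x ∈ M, ∃ y, ∃ p : G.Walk x y,
        p.IsPath ∧ p.length = 2 * #T ∧ ∀ z ∈ p.support, z ∈ T ∪ M := by
  induction T using Finset.induction_on with
  | empty =>
    intro M hM _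
    obtain ⟨x, hx⟩ := card_pos.1 (by simpa using hM)
    exact ⟨x, hx, x, .nil, .nil, rfl, by simpa using hx⟩
  | insert v T hvT ih =>
    intro M hM hadj
    rw [card_insert_of_notMem hvT] at hM
    obtain ⟨x, hx⟩ := card_pos.1 (by omega : 0 < #M)
    obtain ⟨y, hy, w, p, hp, hlen, hsupp⟩ := ih (M := M.erase x)
      (by rw [card_erase_of_mem hx]; omega)
      fun u hu z hz => hadj u (mem_insert_of_mem hu) z (mem_of_mem_erase hz)
    have hvM : ∀ z ∈ M, G.Adj v z := hadj v (mem_insert_self v T)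
    have hv : v ∉ p.support := fun h => by
      rcases mem_union.1 (hsupp v h) with h | h
      · exact hvT h
      · exact G.irrefl (hvM v (mem_of_mem_erase h))
    have hx' : x ∉ p.support := fun h => by
      rcases mem_union.1 (hsupp x h) with h | h
      · exact G.irrefl (hadj x (mem_insert_of_mem h) x hx)
      · exact notMem_erase x M h
    refine ⟨x, hx, w, .cons (hvM x hx).symm (.cons (hvM y (mem_of_mem_erase hy)) p),
      (hp.cons hv).cons ?_, ?_, ?_⟩
    · rw [SimpleGraph.Walk.support_cons, List.mem_cons, not_or]
      exact ⟨(hvM x hx).ne', hx'⟩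
    · rw [SimpleGraph.Walk.length_cons, SimpleGraph.Walk.length_cons, hlen,
        card_insert_of_notMem hvT]
      ring
    · simp only [SimpleGraph.Walk.support_cons, List.mem_cons]
      rintro z (rfl | rfl | hz)
      · exact mem_union_right _ hx
      · exact mem_union_left _ (mem_insert_self _ _)
      · have := hsupp z hz
        grind

open Classical in
theorem card_filter_lt_card_adj_le
    (hG : ∀ ⦃x y⦄ (p : G.Walk x y), p.IsPath → p.length ≠ 2 * (t + 1)) (V S : Finset α) :
    #{x ∈ V | t < #{v ∈ S | G.Adj v x}} ≤ 2 ^ #S * (t + 1) := by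
  have hcover : {x ∈ V | t < #{v ∈ S | G.Adj v x}} ⊆
      (S.powersetCard (t + 1)).biUnion fun T => {x ∈ V | ∀ v ∈ T, G.Adj v x} := by
    intro x hx
    obtain ⟨hxV, hlt⟩ := mem_filter.1 hx
    obtain ⟨T, hT, hTcard⟩ := exists_subset_card_eq (Nat.succ_le_of_lt hlt)
    exact mem_biUnion.2 ⟨T, mem_powersetCard.2 ⟨hT.trans (filter_subset _ _), hTcard⟩,
      mem_filter.2 ⟨hxV, fun v hv => (mem_filter.1 (hT hv)).2⟩⟩
  have hcommon : ∀ T ∈ S.powersetCard (t + 1), #{x ∈ V | ∀ v ∈ T, G.Adj v x} ≤ t + 1 := by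
    intro T hT
    have hTcard := (mem_powersetCard.1 hT).2
    by_contra! hlt
    obtain ⟨x, -, y, p, hp, hlen, -⟩ := exists_isPath_of_forall_adj (G := G)
      (M := {x ∈ V | ∀ v ∈ T, G.Adj v x}) T (hTcard ▸ hlt)
      fun v hv x hx => (mem_filter.1 hx).2 v hv
    exact hG p hp (hTcard ▸ hlen)
  calc #{x ∈ V | t < #{v ∈ S | G.Adj v x}} ≤ #(S.powersetCard (t + 1)) * (t + 1) :=
        (card_le_card hcover).trans (card_biUnion_le_card_mul _ _ _ hcommon)
    _ ≤ 2 ^ #S * (t + 1) := by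
        rw [← card_powerset]; gcongr; exact fun T hT => mem_powerset.2 (mem_powersetCard.1 hT).1

open Classical in
theorem sum_card_adj_le_mul_card_add
    (hG : ∀ ⦃x y⦄ (p : G.Walk x y), p.IsPath → p.length ≠ 2 * (t + 1)) (V S : Finset α) :
    ∑ v ∈ S, #{x ∈ V | G.Adj v x} ≤ t * #V + #S * (2 ^ #S * (t + 1)) := by
  have hpoint : ∀ x ∈ V, #{v ∈ S | G.Adj v x} ≤
      t + if t < #{v ∈ S | G.Adj v x} then #S else 0 := by
    intro x _
    have : #{v ∈ S | G.Adj v x} ≤ #S := card_filter_le _ _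
    split_ifs <;> omega
  calc ∑ v ∈ S, #{x ∈ V | G.Adj v x} = ∑ x ∈ V, #{v ∈ S | G.Adj v x} :=
        sum_card_bipartiteAbove_eq_sum_card_bipartiteBelow G.Adj
    _ ≤ ∑ x ∈ V, (t + if t < #{v ∈ S | G.Adj v x} then #S else 0) := sum_le_sum hpoint
    _ = t * #V + #S * #{x ∈ V | t < #{v ∈ S | G.Adj v x}} := by
        rw [sum_add_distrib, ← sum_filter, sum_const, sum_const, smul_eq_mul, smul_eq_mul,
          mul_comm, mul_comm (#S)]
    _ ≤ t * #V + #S * (2 ^ #S * (t + 1)) := by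
        gcongr; exact card_filter_lt_card_adj_le hG V S

open Classical in
theorem card_filter_le_mul_card_adj_le
    (hG : ∀ ⦃x y⦄ (p : G.Walk x y), p.IsPath → p.length ≠ l) (V : Finset α) (e : ℕ) :
    #{v ∈ V | #V ≤ e * #{x ∈ V | G.Adj v x}} ≤ e * (2 * l) := by
  rcases V.eq_empty_or_nonempty with rfl | hne
  · simp only [filter_empty, card_empty, Nat.zero_le]
  refine Nat.le_of_mul_le_mul_right (c := #V) ?_ hne.card_pos
  calc #{v ∈ V | #V ≤ e * #{x ∈ V | G.Adj v x}} * #V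
      ≤ ∑ v ∈ V with #V ≤ e * #{x ∈ V | G.Adj v x}, e * #{x ∈ V | G.Adj v x} :=
        card_nsmul_le_sum _ _ _ fun v hv => (mem_filter.1 hv).2
    _ ≤ ∑ v ∈ V, e * #{x ∈ V | G.Adj v x} := sum_le_sum_of_subset (filter_subset _ _)
    _ = e * ∑ v ∈ V, #{x ∈ V | G.Adj v x} := (mul_sum _ _ _).symm
    _ ≤ e * (2 * l * #V) := by gcongr; exact sum_card_adj_le hG V
    _ = e * (2 * l) * #V := by ring

end Graph

open Classical in
theorem exists_sum_choose_card_adj_le (q t : ℕ) :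
    ∃ D : ℕ, ∀ (α : Type u) (G : SimpleGraph α) (V : Finset α) (r : ℕ),
      (∀ ⦃x y⦄ (p : G.Walk x y), p.IsPath → p.length ≠ 2 * (t + 1)) →
      (∀ v ∈ V, q * #{x ∈ V | G.Adj v x} ≤ (q - 1) * #V) →
      2 * q * ((r + 2).factorial * ∑ v ∈ V, (#{x ∈ V | G.Adj v x}).choose (r + 2)) ≤
        2 * (q - 1) * #V ^ (r + 1) * (t * #V + D) + #V ^ (r + 2) := by
  set c := 2 * (2 * (t + 1)) with hc
  -- With this threshold the vertices of small degree contribute at most `#V ^ (r + 2)`.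
  set e := 2 * q * c with he
  set K := e * c
  refine ⟨K * (2 ^ K * (t + 1)), fun α G V r hG hdeg => ?_⟩
  set d : α → ℕ := fun v => #{x ∈ V | G.Adj v x}
  have hdV : ∀ v, d v ≤ #V := fun v => card_filter_le _ _
  set S := {v ∈ V | #V ≤ e * d v} with hS
  have hScard : #S ≤ K := card_filter_le_mul_card_adj_le hG V e
  have hheavy : q * ((r + 2).factorial * ∑ v ∈ S, (d v).choose (r + 2)) ≤
      (q - 1) * #V ^ (r + 1) * (t * #V + K * (2 ^ K * (t + 1))) := by
    refine (mul_factorial_mul_sum_choose_le r (fun v _ => hdV v) fun v hv =>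
      hdeg v (mem_filter.1 hv).1).trans (Nat.mul_le_mul_left _ ?_)
    exact (sum_card_adj_le_mul_card_add hG V S).trans (by gcongr; exact one_le_two)
  have hlight : 2 * q * ((r + 2).factorial * ∑ v ∈ V with ¬ #V ≤ e * d v, (d v).choose (r + 2)) ≤
      #V ^ (r + 2) := by
    refine Nat.le_of_mul_le_mul_left ?_ (show 0 < c by omega)
    calc c * (2 * q * ((r + 2).factorial * ∑ v ∈ V with ¬ #V ≤ e * d v, (d v).choose (r + 2)))
        = e * ((r + 2).factorial * ∑ v ∈ V with ¬ #V ≤ e * d v, (d v).choose (r + 2)) := by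
          rw [he]; ring
      _ ≤ 1 * #V ^ (r + 1) * ∑ v ∈ V with ¬ #V ≤ e * d v, d v :=
          mul_factorial_mul_sum_choose_le r (fun v _ => hdV v) fun v hv => by
            have := (mem_filter.1 hv).2; omega
      _ ≤ 1 * #V ^ (r + 1) * (c * #V) := by
          gcongr
          exact (sum_le_sum_of_subset (filter_subset _ _)).trans (sum_card_adj_le hG V)
      _ = c * #V ^ (r + 2) := by ring
  have hsplit := sum_filter_add_sum_filter_not V (fun v => #V ≤ e * d v)
    fun v => (d v).choose (r + 2)
  change 2 * q * ((r + 2).factorial * ∑ v ∈ V, (d v).choose (r + 2)) ≤ _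
  rw [← hsplit, ← hS]
  linarith

/-! ### Vertices of nearly full kernel degree -/

section Centres

variable {α : Type u} [DecidableEq α] {F : Finset (Finset α)} {V : Finset α} {k s : ℕ}

open Classical in
theorem card_le_card_not_centredAt_vertex_add (hF : F ⊆ V.powersetCard k) (hk : 3 ≤ k) :
    #F ≤ #{E ∈ F | ¬ ∃ v, IsCentredAt F s {v} E} +
      ∑ v ∈ V, (#{x ∈ V | (kernelGraph F s).Adj v x}).choose (k - 1) := by
  have hcentred : #{E ∈ F | ∃ v, IsCentredAt F s {v} E} ≤
      ∑ v ∈ V, (#(kernelNbrs V F s {v})).choose (k - 1) := by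
    have := card_filter_isCentredAt_le (s := s) hF V (p := fun v => {v}) fun v _ => by
      rw [card_singleton]; omega
    simp only [card_singleton] at this
    refine (card_le_card fun E hE => ?_).trans this
    obtain ⟨hEF, v, hv⟩ := mem_filter.1 hE
    have hvV : v ∈ V := (mem_powersetCard.1 (hF hEF)).1 (singleton_subset_iff.1 hv.1)
    exact mem_filter.2 ⟨hEF, v, hvV, hv⟩
  have hnbrs : ∀ v, kernelNbrs V F s {v} = {x ∈ V | (kernelGraph F s).Adj v x} := fun v => by
    ext x; rw [mem_kernelNbrs_singleton, mem_filter]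
  simp only [hnbrs] at hcentred
  rw [← card_filter_add_card_filter_not (s := F) fun E => ¬ ∃ v, IsCentredAt F s {v} E]
  simpa only [not_not] using Nat.add_le_add_left hcentred _

end Centres

theorem exists_vertex_of_mul_choose_le {k s q t : ℕ} (hk : 4 ≤ k) (ht : 1 ≤ t)
    (hs : (2 * t + 2) * (k + 1) + 1 ≤ s) (hq : 2 ≤ q) :
    ∃ n₀ : ℕ, ∀ (α : Type u) [DecidableEq α] (V : Finset α) (F : Finset (Finset α)),
      F ⊆ V.powersetCard k → ¬ HasLinearPath F (2 * t + 2) → n₀ ≤ #V →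
      t * (#V - t).choose (k - 1) ≤ #F →
      ∃ v ∈ V, q * #((V \ {v}) \ kernelNbrs V F s {v}) ≤ #V := by
  classical
  obtain ⟨C, hC⟩ := exists_card_not_centredAt_vertex_le.{u} hk (2 * t + 2) (s := s)
    (by nlinarith) (by nlinarith)
  obtain ⟨D, hD⟩ := exists_sum_choose_card_adj_le.{u} q t
  obtain ⟨r, rfl⟩ : ∃ r, k = r + 3 := ⟨k - 3, by omega⟩
  refine ⟨2 * q * (r + 2).factorial * C + 2 * (q - 1) * D +
    2 * q * t * ((r + 2) * (r + 2 + t)) + 1, fun α _ V F hF hpath hn hchoose => ?_⟩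
  by_contra! hsmall
  have hgraph : ∀ ⦃x y⦄ (p : (kernelGraph F s).Walk x y), p.IsPath →
      p.length ≠ 2 * (t + 1) := fun x y p hp hlen => hpath <| by
    have hFk : ∀ E ∈ F, #E = r + 3 := fun E hE => (mem_powersetCard.1 (hF hE)).2
    have := hasLinearPath_of_kernelGraph_isPath hFk hp (by rw [hlen]; exact hs)
    rwa [hlen] at this
  have hsum := hD α (kernelGraph F s) V r hgraph fun v hv => by
    have hlt := hsmall v hv
    rw [card_sdiff_kernelNbrs (singleton_subset_iff.2 hv)] at hlt
    refine le_trans (Nat.mul_le_mul_left _ (card_le_card fun x hx => ?_))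
      (mul_le_sub_one_mul_of_lt_mul_sub hlt)
    exact mem_kernelNbrs_singleton.2 (mem_filter.1 hx)
  have hcover := (card_le_card_not_centredAt_vertex_add (s := s) hF (by omega)).trans
    (Nat.add_le_add_right (hC α V F hF hpath) _)
  simp only [show r + 3 - 1 = r + 2 by omega, show r + 3 - 2 = r + 1 by omega] at hcover hchoose
  have hupper : 2 * q * ((r + 2).factorial * #F) + #V ^ (r + 2) ≤ 2 * q * t * #V ^ (r + 2) +
      (2 * q * (r + 2).factorial * C + 2 * (q - 1) * D) * #V ^ (r + 1) := by
    obtain ⟨q, rfl⟩ : ∃ q', q = q' + 1 := ⟨q - 1, by omega⟩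
    rw [Nat.add_sub_cancel] at hsum ⊢
    generalize (r + 2).factorial = R at *
    generalize #V = n at *
    generalize ∑ v ∈ V, (#{x ∈ V | (kernelGraph F s).Adj v x}).choose (r + 2) = A at *
    calc 2 * (q + 1) * (R * #F) + n ^ (r + 2)
        ≤ 2 * (q + 1) * (R * (C * n ^ (r + 1) + A)) + n ^ (r + 2) := by gcongr
      _ ≤ 2 * (q + 1) * R * C * n ^ (r + 1) + 2 * q * n ^ (r + 1) * (t * n + D) +
            2 * 1 * n ^ (r + 2) := by linarith
      _ ≤ 2 * (q + 1) * R * C * n ^ (r + 1) + 2 * q * n ^ (r + 1) * (t * n + D) +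
            2 * t * n ^ (r + 2) := by gcongr
      _ = _ := by ring
  exact (Nat.lt_of_succ_le hn).not_ge (le_of_mul_choose_le (by omega) hchoose hupper)

section Extension

variable {α : Type*} [DecidableEq α] {F G : Finset (Finset α)} {V : Finset α} {k l s : ℕ} {v : α}

theorem hasLinearPath_add_two_of_kernelNbrs (hF : ∀ E ∈ F, #E = k) (hGF : G ⊆ F)
    (hv : ∀ E ∈ G, v ∉ E) (hnbrs : ∀ E ∈ G, 2 ≤ #(E ∩ kernelNbrs V F s {v}))
    (hN : (l + 1) * k + 1 < #(kernelNbrs V F s {v})) (hs : (l + 3) * (k + 1) + 1 ≤ s)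
    (hG : HasLinearPath G (l + 1)) : HasLinearPath F (l + 3) := by
  obtain ⟨P, hP⟩ := hG
  obtain ⟨x, hx, hW⟩ := (hP.mono hGF).exists_linearPathTo inter_subset_left
    (hnbrs _ (hP.mem l l.lt_succ_self))
  have hvW : v ∉ (range (l + 1)).biUnion P := by
    rw [mem_biUnion]
    rintro ⟨i, hi, hvi⟩
    exact hv _ (hP.mem i (mem_range.1 hi)) hvi
  generalize (range (l + 1)).biUnion P = W at *
  obtain ⟨y, hy, hyW⟩ := exists_mem_notMem_of_card_lt_card ((hW.card_le hF).trans_lt hN)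
  have hvx := (mem_kernelNbrs_singleton.1 (mem_inter.1 hx).2).2
  have hvy := (mem_kernelNbrs_singleton.1 hy).2
  have hxy : x ≠ y := fun h => hyW (h ▸ hW.mem)
  set p : (kernelGraph F s).Walk x y := .cons hvx.symm (.cons hvy .nil)
  have hp : p.IsPath := by
    simp [p, SimpleGraph.Walk.cons_isPath_iff, hvx.ne', hvy.ne, hxy]
  refine hW.append_walk hF hp (fun z hz => ?_) hs
  simp only [p, SimpleGraph.Walk.support_cons, SimpleGraph.Walk.support_nil, List.toFinset_cons,
    List.toFinset_nil, insert_empty_eq, mem_inter, mem_insert, mem_singleton] at hz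
  grind

end Extension

/-! ### The upper bound -/

/-- The number of edges in the extremal `k`-uniform family on `n` vertices without a linear path of
length `2 * t + 2`. -/
def turanBound (k t n : ℕ) : ℕ :=
  (∑ i ∈ Icc 1 t, (n - i).choose (k - 1)) + (n - t - 2).choose (k - 2)

theorem turanBound_succ (k t n : ℕ) :
    turanBound k (t + 1) n = (n - 1).choose (k - 1) + turanBound k t (n - 1) := by
  have hsum : ∑ i ∈ Icc 1 (t + 1), (n - i).choose (k - 1) =
      (n - 1).choose (k - 1) + ∑ i ∈ Icc 1 t, (n - 1 - i).choose (k - 1) := by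
    induction t with
    | zero => simp only [zero_add, Icc_self, sum_singleton, Icc_eq_empty_of_lt one_pos, sum_empty,
        add_zero]
    | succ t ih =>
      rw [sum_Icc_succ_top (by omega), ih, sum_Icc_succ_top (by omega), add_assoc, Nat.sub_sub n 1,
        add_comm 1 (t + 1)]
  rw [turanBound, hsum, turanBound, add_assoc, Nat.sub_sub n 1, add_comm 1 t]

theorem mul_choose_le_turanBound (k t n : ℕ) : t * (n - t).choose (k - 1) ≤ turanBound k t n := by
  refine le_add_right (le_trans (le_of_eq ?_) (card_nsmul_le_sum (Icc 1 t) _ _ fun i hi =>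
    Nat.choose_le_choose (k - 1) (Nat.sub_le_sub_left (mem_Icc.1 hi).2 n)))
  rw [Nat.card_Icc, Nat.add_sub_cancel, smul_eq_mul]

section Shadow

variable {α : Type*} [DecidableEq α] {H : Finset (Finset α)} {B V : Finset α} {r : ℕ}

theorem card_shadow_le_of_le_card_inter (hH : H ⊆ V.powersetCard (r + 2))
    (hB : ∀ E ∈ H, r + 1 ≤ #(E ∩ B)) : #(∂ H) ≤ #B ^ r * #V := by
  have hcover : ∂ H ⊆ (B.powersetCard r ×ˢ V).image fun z => insert z.2 z.1 := by
    intro A hA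
    obtain ⟨E, hE, x, hx, rfl⟩ := mem_shadow_iff.1 hA
    obtain ⟨hEV, hEcard⟩ := mem_powersetCard.1 (hH hE)
    have hinter : r ≤ #(E.erase x ∩ B) := by
      have := pred_card_le_card_erase (s := E ∩ B) (a := x)
      have := hB E hE
      rw [erase_inter]
      omega
    obtain ⟨T, hT, hTcard⟩ := exists_subset_card_eq hinter
    obtain ⟨hTE, hTB⟩ := subset_inter_iff.1 hT
    have hdiff : #(E.erase x \ T) = 1 := by
      rw [card_sdiff_of_subset hTE, card_erase_of_mem hx, hEcard, hTcard]
      omega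
    obtain ⟨y, hy⟩ := card_eq_one.1 hdiff
    have hyE : y ∈ E.erase x := (mem_sdiff.1 (hy ▸ mem_singleton_self y)).1
    refine mem_image.2 ⟨(T, y), mem_product.2 ⟨mem_powersetCard.2 ⟨hTB, hTcard⟩,
      hEV (mem_of_mem_erase hyE)⟩, ?_⟩
    rw [insert_eq, ← hy, sdiff_union_of_subset hTE]
  calc #(∂ H) ≤ #(B.powersetCard r ×ˢ V) := (card_le_card hcover).trans card_image_le
    _ ≤ #B ^ r * #V := by
      rw [card_product, card_powersetCard]
      exact Nat.mul_le_mul_right _ (Nat.choose_le_pow _ _)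

end Shadow

section InductionStep

variable {α : Type*} [DecidableEq α] {F : Finset (Finset α)} {V : Finset α} {r s t : ℕ} {v : α}

theorem not_hasLinearPath_filter_of_kernelNbrs (hF : F ⊆ V.powersetCard (r + 4))
    (hpath : ¬ HasLinearPath F (2 * (t + 1) + 2))
    (hN : (2 * t + 2) * (r + 4) + 1 < #(kernelNbrs V F s {v}))
    (hs : (2 * t + 4) * (r + 5) + 1 ≤ s) :
    ¬ HasLinearPath {E ∈ F | v ∉ E ∧ #(E ∩ ((V \ {v}) \ kernelNbrs V F s {v})) < r + 3}
      (2 * t + 2) := by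
  have hFk : ∀ E ∈ F, #E = r + 4 := fun E hE => (mem_powersetCard.1 (hF hE)).2
  refine fun h => hpath (hasLinearPath_add_two_of_kernelNbrs hFk (filter_subset _ _)
    (fun E hE => (mem_filter.1 hE).2.1) (fun E hE => ?_) hN hs h)
  obtain ⟨hEF, hvE, hlt⟩ := mem_filter.1 hE
  obtain ⟨hEV, hEcard⟩ := mem_powersetCard.1 (hF hEF)
  have hcover : E ⊆ (E ∩ kernelNbrs V F s {v}) ∪ (E ∩ ((V \ {v}) \ kernelNbrs V F s {v})) := by
    intro x hx
    have := hEV hx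
    grind
  have := (card_le_card hcover).trans (card_union_le _ _)
  omega

theorem card_le_of_card_filter_notMem_le {C m : ℕ} (hF : F ⊆ V.powersetCard (r + 4)) (hv : v ∈ V)
    {B : Finset α} (hB : B = (V \ {v}) \ kernelNbrs V F s {v})
    (hshadow : ∀ H ⊆ F, #H ≤ C * #(∂ H)) (hm : #{E ∈ F | v ∉ E ∧ #(E ∩ B) < r + 3} ≤ m) :
    #F ≤ (#V - 1 - #B).choose (r + 3) + #B * (s * #V ^ (r + 1)) + m + C * (#B ^ (r + 2) * #V) := by
  have hthrough := card_filter_superset_le (s := s) (p := {v}) hF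
  rw [card_kernelNbrs (singleton_subset_iff.2 hv), ← hB, card_singleton] at hthrough
  have hfew : #{E ∈ F | v ∉ E ∧ ¬ #(E ∩ B) < r + 3} ≤ C * (#B ^ (r + 2) * #V) :=
    (hshadow _ (filter_subset _ _)).trans <| Nat.mul_le_mul_left _ <|
      card_shadow_le_of_le_card_inter ((filter_subset _ _).trans hF)
        fun E hE => not_lt.1 (mem_filter.1 hE).2.2
  have hsplit := card_filter_add_card_filter_not (s := F) (v ∈ ·)
  have hsplit' := card_filter_add_card_filter_not (s := {E ∈ F | v ∉ E}) fun E => #(E ∩ B) < r + 3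
  rw [filter_filter, filter_filter] at hsplit'
  simp only [singleton_subset_iff, show r + 4 - 1 = r + 3 by omega, show r + 3 - 2 = r + 1 by omega]
    at hthrough
  omega

end InductionStep

theorem exists_card_le_turanBound_succ {k t : ℕ} (hk : 4 ≤ k)
    (ih : ∃ n₀ : ℕ, ∀ (α : Type u) [DecidableEq α] (V : Finset α) (F : Finset (Finset α)),
      F ⊆ V.powersetCard k → ¬ HasLinearPath F (2 * t + 2) → n₀ ≤ #V → #F ≤ turanBound k t #V) :
    ∃ n₀ : ℕ, ∀ (α : Type u) [DecidableEq α] (V : Finset α) (F : Finset (Finset α)),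
      F ⊆ V.powersetCard k → ¬ HasLinearPath F (2 * (t + 1) + 2) → n₀ ≤ #V →
      #F ≤ turanBound k (t + 1) #V := by
  obtain ⟨n₁, hind⟩ := ih
  obtain ⟨C, hC⟩ := exists_card_le_mul_card_shadow.{u} (by omega : 2 ≤ k) (2 * (t + 1) + 2)
  obtain ⟨r, rfl⟩ : ∃ r, k = r + 4 := ⟨k - 4, by omega⟩
  set s := (2 * t + 4) * (r + 5) + 1 with hs
  obtain ⟨q, n₂, hq, hclean⟩ := exists_choose_sub_add_le_choose (r + 1) (s + C) 1
  obtain ⟨n₃, hstab⟩ := exists_vertex_of_mul_choose_le.{u} hk (Nat.le_add_left 1 t) hs.ge hq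
  refine ⟨n₁ + n₂ + n₃ + 2 * ((2 * t + 2) * (r + 4)) + 5, fun α _ V F hF hpath hn => ?_⟩
  by_contra! hlarge
  obtain ⟨v, hvV, hvq⟩ :=
    hstab α V F hF hpath (by omega) ((mul_choose_le_turanBound _ _ _).trans hlarge.le)
  have hnopath := not_hasLinearPath_filter_of_kernelNbrs (s := s) (v := v) hF hpath
  rw [card_kernelNbrs (singleton_subset_iff.2 hvV), card_singleton] at hnopath
  generalize hB : (V \ {v}) \ kernelNbrs V F s {v} = B at *
  have hBV : #B ≤ #V := card_le_card (hB ▸ sdiff_subset.trans sdiff_subset)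
  have hBhalf := Nat.mul_le_mul_right #B hq
  have hmost : #{E ∈ F | v ∉ E ∧ #(E ∩ B) < r + 3} ≤ turanBound (r + 4) t (#V - 1) := by
    rw [← card_erase_of_mem hvV]
    refine hind α (V.erase v) _ (fun E hE => ?_) (hnopath (by omega) le_rfl)
      (by rw [card_erase_of_mem hvV]; omega)
    obtain ⟨hEF, hvE, -⟩ := mem_filter.1 hE
    obtain ⟨hEV, hEcard⟩ := mem_powersetCard.1 (hF hEF)
    exact mem_powersetCard.2 ⟨subset_erase.2 ⟨hEV, hvE⟩, hEcard⟩
  have hcard := card_le_of_card_filter_notMem_le (s := s) hF hvV hB.symm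
    (fun H hH => hC α H (fun E hE => (mem_powersetCard.1 (hF (hH hE))).2)
      fun h => hpath (h.mono hH)) hmost
  have hfew : q * (C * (#B ^ (r + 2) * #V)) ≤ (s + C) * #B * #V ^ (r + 2) :=
    calc q * (C * (#B ^ (r + 2) * #V)) = C * #B * ((q * #B) * #B ^ r * #V) := by ring
      _ ≤ (s + C) * #B * (#V * #V ^ r * #V) := by gcongr; omega
      _ = (s + C) * #B * #V ^ (r + 2) := by ring
  have hthrough : #B * (s * #V ^ (r + 1)) ≤ (s + C) * #B * #V ^ (r + 1) := by
    nlinarith [Nat.zero_le (C * #B * #V ^ (r + 1))]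
  have hsum := hclean #V (by omega) #B _ hvq hfew
  rw [show r + 1 + 2 = r + 3 from rfl] at hsum
  simp only [turanBound_succ, show r + 4 - 1 = r + 3 by omega] at hlarge
  omega

theorem exists_card_le_turanBound {k : ℕ} (hk : 4 ≤ k) (t : ℕ) :
    ∃ n₀ : ℕ, ∀ (α : Type u) [DecidableEq α] (V : Finset α) (F : Finset (Finset α)),
      F ⊆ V.powersetCard k → ¬ HasLinearPath F (2 * t + 2) → n₀ ≤ #V →
      #F ≤ turanBound k t #V := by
  induction t with
  | zero =>
    simpa only [turanBound, Icc_eq_empty_of_lt one_pos, sum_empty, zero_add, Nat.sub_zero,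
      mul_zero] using exists_card_le_choose_of_not_hasLinearPath_two hk
  | succ t ih => exact exists_card_le_turanBound_succ hk ih

/-! ### The extremal family -/

section Extremal

variable {α : Type*} [DecidableEq α] {V S p : Finset α} {k n t : ℕ}

theorem sum_choose_sub_add_choose (hk : 1 ≤ k) :
    ∀ {t}, t ≤ n → (∑ i ∈ Icc 1 t, (n - i).choose (k - 1)) + (n - t).choose k = n.choose k
  | 0, _ => by simp only [Icc_eq_empty_of_lt one_pos, sum_empty, zero_add, Nat.sub_zero]
  | t + 1, ht => by
    have ih := sum_choose_sub_add_choose hk (Nat.le_of_succ_le ht)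
    have hpascal := Nat.choose_succ_succ' (n - (t + 1)) (k - 1)
    rw [Nat.sub_add_cancel hk, show n - (t + 1) + 1 = n - t by omega] at hpascal
    rw [sum_Icc_succ_top (by omega)]
    omega

/-- The family of all `k`-subsets of `V` that meet `S` or contain `p`; it is extremal when `S` has
`t` elements and `p` is a pair disjoint from `S`. -/
def extremalFamily (V : Finset α) (k : ℕ) (S p : Finset α) : Finset (Finset α) :=
  {E ∈ V.powersetCard k | Disjoint E S → p ⊆ E}

theorem extremalFamily_subset : extremalFamily V k S p ⊆ V.powersetCard k :=
  filter_subset _ _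

theorem card_extremalFamily (hS : S ⊆ V) (hp : p ⊆ V \ S) (hp2 : #p = 2) (hk : 2 ≤ k) :
    #(extremalFamily V k S p) = turanBound k #S #V := by
  have havoid : {E ∈ V.powersetCard k | Disjoint E S} = (V \ S).powersetCard k := by
    ext E
    simp only [mem_filter, mem_powersetCard, subset_sdiff]
    tauto
  have hmeet := card_filter_add_card_filter_not (s := V.powersetCard k) (Disjoint · S)
  have hsplit := card_filter_add_card_filter_not (s := extremalFamily V k S p) (Disjoint · S)
  have hpair : #{E ∈ extremalFamily V k S p | Disjoint E S} = (#V - #S - 2).choose (k - 2) := by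
    rw [extremalFamily, filter_filter, ← card_sdiff_of_subset hS, ← hp2,
      ← card_filter_powersetCard_subset p (V \ S) k hp (hp2 ▸ hk), ← havoid, filter_filter]
    exact congrArg card (filter_congr fun E _ => by tauto)
  have hrest : {E ∈ extremalFamily V k S p | ¬ Disjoint E S} =
      {E ∈ V.powersetCard k | ¬ Disjoint E S} := by
    ext E
    simp only [extremalFamily, mem_filter]
    tauto
  rw [havoid, card_powersetCard, card_powersetCard, card_sdiff_of_subset hS] at hmeet
  rw [hpair, hrest] at hsplit
  have hsum := sum_choose_sub_add_choose (n := #V) (k := k) (by omega) (card_le_card hS)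
  rw [turanBound]
  omega

theorem not_hasLinearPath_extremalFamily (hp2 : #p = 2) :
    ¬ HasLinearPath (extremalFamily V k S p) (2 * #S + 2) := by
  rintro ⟨P, hP⟩
  have havoid : #{i ∈ range (2 * #S + 2) | Disjoint (P i) S} ≤ 1 := by
    rw [card_le_one]
    have hlt : ∀ i j, i < j → j < 2 * #S + 2 → Disjoint (P i) S → ¬ Disjoint (P j) S := by
      intro i j hij hj hi hj'
      have hpi := (mem_filter.1 (hP.mem i (hij.trans hj))).2 hi
      have hpj := (mem_filter.1 (hP.mem j hj)).2 hj'
      have := (card_le_card (subset_inter hpi hpj)).trans (hP.card_inter_le_one hij hj)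
      omega
    intro i hi j hj
    simp only [mem_filter, mem_range] at hi hj
    rcases lt_trichotomy i j with h | h | h
    · exact absurd hj.2 (hlt i j h hj.1 hi.2)
    · exact h
    · exact absurd hi.2 (hlt j i h hi.1 hj.2)
  have hmeet : #{i ∈ range (2 * #S + 2) | ¬ Disjoint (P i) S} ≤ #S * 2 := by
    have hcover : {i ∈ range (2 * #S + 2) | ¬ Disjoint (P i) S} ⊆
        S.biUnion fun x => {i ∈ range (2 * #S + 2) | x ∈ P i} := by
      intro i hi
      obtain ⟨hil, hmeet⟩ := mem_filter.1 hi
      obtain ⟨x, hx, hxS⟩ := not_disjoint_iff.1 hmeet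
      exact mem_biUnion.2 ⟨x, hxS, mem_filter.2 ⟨hil, hx⟩⟩
    exact (card_le_card hcover).trans
      (card_biUnion_le_card_mul _ _ _ fun x _ => hP.card_filter_mem_le_two x)
  have hsplit := card_filter_add_card_filter_not (s := range (2 * #S + 2)) fun i => Disjoint (P i) S
  rw [card_range] at hsplit
  omega

theorem exists_card_eq_turanBound (hk : 2 ≤ k) (hn : t + 2 ≤ #V) :
    ∃ F ⊆ V.powersetCard k, ¬ HasLinearPath F (2 * t + 2) ∧ #F = turanBound k t #V := by
  obtain ⟨S, hS, rfl⟩ := exists_subset_card_eq (Nat.le_of_add_right_le hn)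
  obtain ⟨p, hp, hp2⟩ := exists_subset_card_eq (s := V \ S) (n := 2)
    (by rw [card_sdiff_of_subset hS]; omega)
  exact ⟨extremalFamily V k S p, extremalFamily_subset, not_hasLinearPath_extremalFamily hp2,
    card_extremalFamily hS hp hp2 hk⟩

end Extremal

section Encoding

variable {k l n : ℕ} {F : Finset (Finset (Fin n))}

theorem containsLinearPath_iff (hk : 2 ≤ k) (hF : ∀ E ∈ F, #E = k) :
    ContainsLinearPath k l F ↔ HasLinearPath F l := by
  constructor
  · rintro ⟨P, -, hmem, -, hcard, hempty⟩
    refine ⟨fun i => if hi : i < l then P ⟨i, hi⟩ else ∅, fun i hi => ?_, fun i hi => ?_,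
      fun i j hij hj => ?_⟩
    · rw [dif_pos hi]
      exact hmem _
    · rw [dif_pos hi, dif_pos (Nat.lt_of_succ_lt hi)]
      exact hcard _ _ rfl
    · rw [dif_pos hj, dif_pos (by omega)]
      exact hempty _ _ hij
  · rintro ⟨P, hP⟩
    have hinj := hP.injOn fun E hE => (hF E hE).symm ▸ hk
    refine ⟨fun i => P i, fun i j h => Fin.ext (hinj i.2 j.2 h), fun i => hP.mem i i.2,
      fun i => hF _ (hP.mem i i.2), fun i j hij => ?_, fun i j hij => hP.inter_eq_empty i j hij j.2⟩
    have := hP.card_inter i (hij ▸ j.2)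
    rwa [hij] at this

end Encoding

theorem turan_linear_path_even_general (k t : ℕ) (hk : 4 ≤ k) :
    ∃ n₀ : ℕ, ∀ n : ℕ, n₀ ≤ n →
      IsGreatest {m : ℕ | ∃ F : Finset (Finset (Fin n)),
          (∀ A ∈ F, A.card = k) ∧ ¬ ContainsLinearPath k (2 * t + 2) F ∧ F.card = m}
        ((∑ i ∈ Finset.Icc 1 t, (n - i).choose (k - 1)) + (n - t - 2).choose (k - 2)) := by
  obtain ⟨n₁, hupper⟩ := exists_card_le_turanBound hk t
  have hcard : ∀ n, #(univ : Finset (Fin n)) = n := Finset.card_fin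
  refine ⟨n₁ + t + 2, fun n hn => ⟨?_, ?_⟩⟩
  · obtain ⟨F, hF, hpath, hFcard⟩ := exists_card_eq_turanBound (V := (univ : Finset (Fin n)))
      (t := t) (by omega : 2 ≤ k) (by rw [hcard]; omega)
    have hFk : ∀ E ∈ F, #E = k := fun E hE => (mem_powersetCard.1 (hF hE)).2
    rw [hcard] at hFcard
    exact ⟨F, hFk, by rwa [containsLinearPath_iff (by omega) hFk], hFcard⟩
  · rintro m ⟨F, hFk, hpath, rfl⟩
    rw [containsLinearPath_iff (by omega) hFk] at hpath
    have := hupper (Fin n) univ F (fun E hE => mem_powersetCard.2 ⟨subset_univ E, hFk E hE⟩) hpath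
      (by rw [hcard]; omega)
    rwa [hcard] at this

/-- F\"uredi–Jiang–Seiver: for k ≥ 4, t ≥ 1 and all sufficiently large n, the Turán number
of the k-uniform linear path of length 2t+2 is C(n-1,k-1)+⋯+C(n-t,k-1)+C(n-t-2,k-2). -/
theorem turan_linear_path_even (k t : ℕ) (hk : 4 ≤ k) (ht : 1 ≤ t) :
    ∃ n₀ : ℕ, ∀ n : ℕ, n₀ ≤ n →
      IsGreatest {m : ℕ | ∃ F : Finset (Finset (Fin n)),
          (∀ A ∈ F, A.card = k) ∧ ¬ ContainsLinearPath k (2 * t + 2) F ∧ F.card = m}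
        ((∑ i ∈ Finset.Icc 1 t, (n - i).choose (k - 1)) + (n - t - 2).choose (k - 2)) :=
  turan_linear_path_even_general k t hk
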